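/- arXiv:1710.10694 — 3 statements merged into one kernel-verified Lean document; each statement's English description precedes it below -/
import Mathlib

section
/- Let (Ω, μ) be a probability space and T : Ω → Ω an ergodic measure-preserving transformation. Let (X, d) be a proper metric space with basepoint x₀ ∈ X, and let ω ↦ g_ω be an assignment of a surjective isometry g_ω of X to each ω ∈ Ω such that (ω, x) ↦ g_ω x is measurable and ∫_Ω d(g_ω x₀, x₀) dμ(ω) < ∞. Set l := inf_N (1/N) ∫_Ω d(g_ω g_{Tω} ⋯ g_{T^{N−1}ω} x₀, x₀) dμ(ω). Then: (a) for μ-a.e. ω, lim_{N→∞} (1/N) d(g_ω g_{Tω} ⋯ g_{T^{N−1}ω} x₀, x₀) = l; (b) there exists a measurable map ω ↦ h_ω from Ω to the closure X̄ of Φ(X) (with its topology of pointwise convergence) such that for μ-a.e. ω, lim_{N→∞} −(1/N) h_ω(g_ω g_{Tω} ⋯ g_{T^{N−1}ω} x₀) = l; and (c) if l > 0 then h_ω ∈ X̄ \ Φ(X) for μ-a.e. ω. -/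
open MeasureTheory Filter Topology

/-- The orbit points `g_ω g_{Tω} ⋯ g_{T^{N−1}ω} x₀`. -/
noncomputable def orbitPt {Ω X : Type*} (T : Ω → Ω) (g : Ω → X → X) (x₀ : X) :
    ℕ → Ω → X
  | 0, _ => x₀
  | n + 1, ω => g ω (orbitPt T g x₀ n (T ω))

/-!
Let `x_n = orbitPt T g x₀ n` and `a n = d(x_n, x₀)`, a subadditive cocycle with mean growth rate
`l`. Birkhoff's theorem bounds the growth of `a` from above by `l`. For the lower bound, fix a block
length `s` and `ε > 0`, and let `E n ω` be the maximum over `k` of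
`(l - ε) s k + a (n - s k) (T^{s k} ω)`, so that `a n ≤ E n`. The increments of `E` integrate to at
most roughly `l`, plus a cost proportional to the excess of `a s / s` over `l`, while each time
`n` with `a n < E n` saves `ε`. Since the integral of `E n` is at least `l n`, such times are rare
when the excess is small, and the excess tends to `0` in mean as `s → ∞`. Almost every `ω` therefore
has arbitrarily large times `n` with `a n = E n` simultaneously for many pairs `(s, ε)`.

At such a time `d(x_n, x_{s k}) = a (n - s k) (T^{s k} ω)` is at most `a n ω - (l - ε) s k`, which
says `h_{x_n}(x_{s k}) ≤ -(l - ε) s k`. This inequality passes to any limit `h` of the functionals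
`h_{x_n}` along these times, and sublinearity of `n ↦ d(x_{n + r}, x_n)` for bounded `r` extends it
from multiples of `s` to all indices. Hence `-h(x_n) / n` and `a n / n`, which dominates it, both
tend to `l`. Finally `-h_x ≤ d(x, x₀)` is bounded, so `h` is not of this form when `l > 0`.
-/

section BirkhoffErgodicTheorem

variable {Ω : Type*} {T : Ω → Ω} {f : Ω → ℝ}

theorem partialSups_birkhoffSum_succ_apply (T : Ω → Ω) (f : Ω → ℝ) (n : ℕ) (ω : Ω) :
    partialSups (birkhoffSum T f) (n + 1) ω
      = max 0 (f ω + partialSups (birkhoffSum T f) n (T ω)) := by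
  induction n with
  | zero =>
    rw [partialSups_add_one, Pi.sup_apply, zero_add, birkhoffSum_one]
    simp only [partialSups_zero, birkhoffSum_zero, add_zero]
  | succ n ih =>
    rw [partialSups_add_one, Pi.sup_apply, ih, birkhoffSum_succ', partialSups_add_one,
      Pi.sup_apply, max_assoc, max_add_add_left]

theorem bddAbove_range_birkhoffSum_apply_iff (ω : Ω) :
    BddAbove (Set.range fun n => birkhoffSum T f n (T ω))
      ↔ BddAbove (Set.range fun n => birkhoffSum T f n ω) := by
  constructor
  · rintro ⟨C, hC⟩
    refine ⟨max 0 (f ω + C), Set.forall_mem_range.2 fun n => ?_⟩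
    cases n with
    | zero => simp
    | succ n =>
      rw [birkhoffSum_succ']
      exact le_max_of_le_right (by gcongr; exact hC ⟨n, rfl⟩)
  · rintro ⟨C, hC⟩
    refine ⟨C - f ω, Set.forall_mem_range.2 fun n => ?_⟩
    rw [le_sub_iff_add_le', ← birkhoffSum_succ']
    exact hC ⟨n + 1, rfl⟩

variable [MeasurableSpace Ω] {μ : Measure Ω}

theorem integral_comp_measurePreserving (hT : MeasurePreserving T μ μ)
    (hf : AEStronglyMeasurable f μ) : ∫ ω, f (T ω) ∂μ = ∫ ω, f ω ∂μ := by
  rw [← integral_map hT.aemeasurable (by rwa [hT.map_eq]), hT.map_eq]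

theorem integrable_birkhoffSum (hT : MeasurePreserving T μ μ) (hf : Integrable f μ) (n : ℕ) :
    Integrable (birkhoffSum T f n) μ :=
  integrable_finsetSum _ fun k _ => (hT.iterate k).integrable_comp_of_integrable hf

theorem integral_birkhoffSum (hT : MeasurePreserving T μ μ) (hf : Integrable f μ) (n : ℕ) :
    ∫ ω, birkhoffSum T f n ω ∂μ = n * ∫ ω, f ω ∂μ := by
  have hiter (k : ℕ) : Integrable (fun ω => f (T^[k] ω)) μ :=
    (hT.iterate k).integrable_comp_of_integrable hf
  simp only [birkhoffSum, integral_finsetSum _ fun k _ => hiter k,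
    integral_comp_measurePreserving (hT.iterate _) hf.aestronglyMeasurable, Finset.sum_const,
    Finset.card_range, nsmul_eq_mul]

theorem integrable_partialSups {u : ℕ → Ω → ℝ} (hu : ∀ n, Integrable (u n) μ) (n : ℕ) :
    Integrable (partialSups u n) μ := by
  induction n with
  | zero => simpa only [partialSups_zero] using hu 0
  | succ n ih => simpa only [partialSups_add_one] using ih.sup (hu (n + 1))

theorem integral_nonneg_of_ae_not_bddAbove_birkhoffSum (hT : MeasurePreserving T μ μ)
    (hf : Integrable f μ)
    (hunbdd : ∀ᵐ ω ∂μ, ¬BddAbove (Set.range fun n => birkhoffSum T f n ω)) :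
    0 ≤ ∫ ω, f ω ∂μ := by
  set M := partialSups (birkhoffSum T f)
  have hM (n : ℕ) : Integrable (M n) μ := integrable_partialSups (integrable_birkhoffSum hT hf) n
  have hMT (n : ℕ) : Integrable (fun ω => M n (T ω)) μ := hT.integrable_comp_of_integrable (hM n)
  have hM_nonneg (n : ℕ) (ω : Ω) : 0 ≤ M n ω :=
    le_partialSups_of_le (birkhoffSum T f) n.zero_le ω
  have hdiff (n : ℕ) (ω : Ω) : M (n + 1) ω - M n (T ω) = max (-M n (T ω)) (f ω) := by
    rw [partialSups_birkhoffSum_succ_apply, ← max_sub_sub_right, zero_sub, add_sub_cancel_right]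
  have hlim : Tendsto (fun n => ∫ ω, (M (n + 1) ω - M n (T ω)) ∂μ) atTop (𝓝 (∫ ω, f ω ∂μ)) := by
    refine tendsto_integral_of_dominated_convergence (fun ω => |f ω|)
      (fun n => ((hM _).sub (hMT n)).aestronglyMeasurable) hf.abs
      (fun n => .of_forall fun ω => ?_) ?_
    · rw [hdiff, Real.norm_eq_abs, abs_le]
      exact ⟨(neg_abs_le _).trans (le_max_right _ _),
        max_le ((neg_nonpos.2 (hM_nonneg n _)).trans (abs_nonneg _)) (le_abs_self _)⟩
    · filter_upwards [hunbdd] with ω hω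
      rw [← bddAbove_range_birkhoffSum_apply_iff, not_bddAbove_iff] at hω
      obtain ⟨_, ⟨N, rfl⟩, hN⟩ := hω (-f ω)
      refine tendsto_const_nhds.congr' ?_
      filter_upwards [eventually_ge_atTop N] with n hn
      rw [hdiff, max_eq_right]
      linarith [le_partialSups_of_le (birkhoffSum T f) hn (T ω)]
  refine ge_of_tendsto' hlim fun n => ?_
  rw [integral_sub (hM _) (hMT n), integral_comp_measurePreserving hT (hM n).aestronglyMeasurable,
    sub_nonneg]
  exact integral_mono (hM n) (hM _) (M.monotone n.le_succ)

theorem ae_bddAbove_birkhoffSum (hT : Ergodic T μ) (hf : Integrable f μ)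
    (hneg : ∫ ω, f ω ∂μ < 0) :
    ∀ᵐ ω ∂μ, BddAbove (Set.range fun n => birkhoffSum T f n ω) := by
  set E := {ω | BddAbove (Set.range fun n => birkhoffSum T f n ω)}
  have hE : E = ⋃ C : ℕ, ⋂ n, {ω | birkhoffSum T f n ω ≤ C} := by
    ext ω
    simp only [E, Set.mem_ofPred_eq, Set.mem_iUnion, Set.mem_iInter]
    exact ⟨fun ⟨C, hC⟩ => (exists_nat_ge C).imp fun _ hk n => (hC ⟨n, rfl⟩).trans hk,
      fun ⟨C, hC⟩ => ⟨C, Set.forall_mem_range.2 hC⟩⟩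
  have hE_meas : NullMeasurableSet E μ := by
    rw [hE]
    exact .iUnion fun C => .iInter fun n => nullMeasurableSet_le
      (integrable_birkhoffSum hT.toMeasurePreserving hf n).aemeasurable aemeasurable_const
  have hE_inv : T ⁻¹' E = E := Set.ext bddAbove_range_birkhoffSum_apply_iff
  refine (hT.quasiErgodic.ae_mem_or_ae_notMem₀ hE_meas hE_inv.eventuallyEq).resolve_right
    fun hunbdd => hneg.not_ge ?_
  exact integral_nonneg_of_ae_not_bddAbove_birkhoffSum hT.toMeasurePreserving hf hunbdd

variable [IsProbabilityMeasure μ]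

theorem ae_eventually_birkhoffSum_div_lt (hT : Ergodic T μ) (hf : Integrable f μ) :
    ∀ᵐ ω ∂μ, ∀ B > ∫ ω, f ω ∂μ, ∀ᶠ n : ℕ in atTop, birkhoffSum T f n ω / n < B := by
  have hbdd : ∀ᵐ ω ∂μ, ∀ q : ℚ, ∫ ω, f ω ∂μ < q →
      BddAbove (Set.range fun n => birkhoffSum T (fun ω => f ω - q) n ω) := by
    refine ae_all_iff.2 fun q => ae_all_iff.2 fun hq =>
      ae_bddAbove_birkhoffSum hT (hf.sub (integrable_const _)) ?_
    rw [integral_sub hf (integrable_const _), integral_const, probReal_univ, one_smul]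
    linarith
  filter_upwards [hbdd] with ω hω B hB
  obtain ⟨q, hq, hqB⟩ := exists_rat_btwn hB
  obtain ⟨C, hC⟩ := hω q hq
  have hlim : Tendsto (fun n : ℕ => C / n + q) atTop (𝓝 (0 + q)) :=
    (tendsto_const_div_atTop_nhds_zero_nat C).add_const _
  rw [zero_add] at hlim
  filter_upwards [eventually_gt_atTop 0, hlim.eventually_lt_const hqB] with n hn hCn
  have hn' : (0 : ℝ) < n := by exact_mod_cast hn
  have hle : birkhoffSum T f n ω - n * q ≤ C := by
    simpa only [birkhoffSum, Finset.sum_sub_distrib, Finset.sum_const, Finset.card_range,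
      nsmul_eq_mul] using hC ⟨n, rfl⟩
  refine lt_of_le_of_lt ?_ hCn
  rw [div_add' _ _ _ hn'.ne']
  gcongr
  linarith

theorem ae_tendsto_birkhoffSum_div (hT : Ergodic T μ) (hf : Integrable f μ) :
    ∀ᵐ ω ∂μ, Tendsto (fun n : ℕ => birkhoffSum T f n ω / n) atTop (𝓝 (∫ ω, f ω ∂μ)) := by
  filter_upwards [ae_eventually_birkhoffSum_div_lt hT hf,
    ae_eventually_birkhoffSum_div_lt hT hf.neg] with ω hupper hlower
  refine tendsto_order.2 ⟨fun B hB => ?_, hupper⟩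
  simp only [Pi.neg_apply, integral_neg] at hlower
  filter_upwards [hlower (-B) (neg_lt_neg hB)] with n hn
  simpa only [birkhoffSum, Pi.neg_apply, Finset.sum_neg_distrib, neg_div, neg_lt_neg_iff] using hn

theorem ae_tendsto_comp_iterate_div (hT : Ergodic T μ) (hf : Integrable f μ) :
    ∀ᵐ ω ∂μ, Tendsto (fun n : ℕ => f (T^[n] ω) / n) atTop (𝓝 0) := by
  filter_upwards [ae_tendsto_birkhoffSum_div hT hf] with ω hω
  have hsucc : Tendsto (fun n : ℕ => birkhoffSum T f (n + 1) ω / ((n + 1 : ℕ) : ℝ)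
      * ((n : ℝ) / (n + 1))⁻¹) atTop (𝓝 ((∫ ω, f ω ∂μ) * 1⁻¹)) :=
    (hω.comp (tendsto_add_atTop_nat 1)).mul
      ((tendsto_natCast_div_add_atTop (1 : ℝ)).inv₀ one_ne_zero)
  have hdiff := hsucc.sub hω
  rw [inv_one, mul_one, sub_self] at hdiff
  refine hdiff.congr' ?_
  filter_upwards [eventually_gt_atTop 0] with n hn
  have hn' : (n : ℝ) ≠ 0 := by exact_mod_cast hn.ne'
  rw [birkhoffSum_succ]
  push_cast
  field_simp
  ring

end BirkhoffErgodicTheorem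

theorem sum_range_add_le_of_add_le {F D : ℕ → ℝ} {s : ℕ} (h : ∀ n, F (n + s) ≤ F n + D n)
    (N : ℕ) :
    ∑ r ∈ Finset.range s, F (N + r)
      ≤ ∑ r ∈ Finset.range s, F r + ∑ n ∈ Finset.range N, D n := by
  induction N with
  | zero => simp
  | succ N ih =>
    have hshift : ∑ r ∈ Finset.range s, F (N + 1 + r) + F N
        = ∑ r ∈ Finset.range s, F (N + r) + F (N + s) := by
      rw [← Finset.sum_range_succ, Finset.sum_range_succ', add_zero]
      simp only [add_assoc, add_comm 1]
    rw [Finset.sum_range_succ]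
    linarith [h N]

theorem tendsto_integral_zero_of_le_of_tendsto_integral {Ω : Type*} [MeasurableSpace Ω]
    {μ : Measure Ω} {Z Y : ℕ → Ω → ℝ} {y : Ω → ℝ} (hZ : ∀ n, Integrable (Z n) μ)
    (hY : ∀ n, Integrable (Y n) μ) (hy : Integrable y μ) (hZ_nonneg : ∀ n ω, 0 ≤ Z n ω)
    (hZY : ∀ n ω, Z n ω ≤ Y n ω) (hZ_lim : ∀ᵐ ω ∂μ, Tendsto (Z · ω) atTop (𝓝 0))
    (hY_lim : ∀ᵐ ω ∂μ, Tendsto (Y · ω) atTop (𝓝 (y ω)))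
    (hY_int : Tendsto (fun n => ∫ ω, Y n ω ∂μ) atTop (𝓝 (∫ ω, y ω ∂μ))) :
    Tendsto (fun n => ∫ ω, Z n ω ∂μ) atTop (𝓝 0) := by
  have htrunc (n : ℕ) : Integrable (fun ω => min (Z n ω) (y ω) - min (Y n ω) (y ω)) μ :=
    ((hZ n).inf hy).sub ((hY n).inf hy)
  have hmin_le {x : ℝ} (hx : 0 ≤ x) (t : ℝ) : |min x t| ≤ |t| :=
    abs_le.2 ⟨le_min ((neg_nonpos.2 (abs_nonneg t)).trans hx) (neg_abs_le t),
      (min_le_right x t).trans (le_abs_self t)⟩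
  have hlim : Tendsto (fun n => ∫ ω, (min (Z n ω) (y ω) - min (Y n ω) (y ω)) ∂μ) atTop
      (𝓝 (∫ ω, -y ω ∂μ)) := by
    refine tendsto_integral_of_dominated_convergence (fun ω => |y ω| + |y ω|)
      (fun n => (htrunc n).aestronglyMeasurable) (hy.abs.add hy.abs)
      (fun n => .of_forall fun ω => ?_) ?_
    · exact (abs_sub _ _).trans (add_le_add (hmin_le (hZ_nonneg n ω) _)
        (hmin_le ((hZ_nonneg n ω).trans (hZY n ω)) _))
    · filter_upwards [hZ_lim, hY_lim] with ω hZω hYω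
      have hy_nonneg : 0 ≤ y ω :=
        ge_of_tendsto' hYω fun n => (hZ_nonneg n ω).trans (hZY n ω)
      simpa only [min_eq_left hy_nonneg, min_self, zero_sub] using
        (hZω.min (tendsto_const_nhds (x := y ω))).sub (hYω.min (tendsto_const_nhds (x := y ω)))
  have hupper := hlim.add hY_int
  rw [integral_neg, neg_add_cancel] at hupper
  refine squeeze_zero (fun n => integral_nonneg (hZ_nonneg n)) (fun n => ?_) hupper
  rw [← integral_add (htrunc n) (hY n)]
  refine integral_mono (hZ n) ((htrunc n).add (hY n)) fun ω => ?_
  have hexcess := max_le_max_right 0 (sub_le_sub_right (hZY n ω) (y ω))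
  have hsub (x : ℝ) : x - min x (y ω) = max (x - y ω) 0 := by
    rw [max_comm, ← sub_self x, max_sub_sub_left]
  linarith [hsub (Z n ω), hsub (Y n ω)]

theorem integral_max_mul {Ω : Type*} [MeasurableSpace Ω] {μ : Measure Ω}
    [IsProbabilityMeasure μ] {f : Ω → ℝ} (hf : Integrable f μ) (A : ℝ) {s : ℝ} (hs : 0 < s) :
    ∫ ω, max (f ω) (A * s) ∂μ = A * s + s * ∫ ω, max (f ω / s - A) 0 ∂μ := by
  have hexcess : Integrable (fun ω => max (f ω / s - A) 0) μ :=
    ((hf.div_const s).sub (integrable_const A)).sup (integrable_const 0)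
  have hpoint (ω : Ω) : max (f ω) (A * s) = A * s + s * max (f ω / s - A) 0 := by
    rw [mul_max_of_nonneg _ _ hs.le, mul_sub, mul_div_cancel₀ _ hs.ne', mul_zero,
      ← max_add_add_left, add_zero, mul_comm A, add_sub_cancel]
  simp only [hpoint]
  rw [integral_add (integrable_const _) (hexcess.const_mul s), integral_const,
    probReal_univ, one_smul, integral_const_mul]

/-- An integrable subadditive cocycle over `T`, in the sense of Kingman's theorem. -/
structure IsSubadditiveCocycle {Ω : Type*} [MeasurableSpace Ω] (μ : Measure Ω) (T : Ω → Ω)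
    (a : ℕ → Ω → ℝ) : Prop where
  measurable (n : ℕ) : Measurable (a n)
  integrable (n : ℕ) : Integrable (a n) μ
  add_le (n m : ℕ) (ω : Ω) : a (n + m) ω ≤ a n ω + a m (T^[n] ω)

/-- `A` is the mean growth rate `inf (1/N) ∫ a N` of `a`, the infimum being over `N > 0`.
It is encoded by `IsGLB` because `⨅` is `0` for a family that is not bounded below. -/
def IsMeanGrowthRate {Ω : Type*} [MeasurableSpace Ω] (μ : Measure Ω) (a : ℕ → Ω → ℝ)
    (A : ℝ) : Prop :=
  IsGLB (Set.range fun N : {n : ℕ // 0 < n} => (∫ ω, a N ω ∂μ) / (N : ℕ)) A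

section SubadditiveCocycle

variable {Ω : Type*} [MeasurableSpace Ω] {μ : Measure Ω} {T : Ω → Ω} {a : ℕ → Ω → ℝ} {A : ℝ}

namespace IsSubadditiveCocycle

theorem mul_le_integral (ha : IsSubadditiveCocycle μ T a) (hA : IsMeanGrowthRate μ a A) (n : ℕ) :
    A * n ≤ ∫ ω, a n ω ∂μ := by
  obtain rfl | hn := n.eq_zero_or_pos
  · simpa using integral_nonneg fun ω => le_add_iff_nonneg_right _ |>.1 (ha.add_le 0 0 ω)
  · exact (le_div_iff₀ (by exact_mod_cast hn)).1 (hA.1 ⟨⟨n, hn⟩, rfl⟩)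

theorem le_birkhoffSum (ha : IsSubadditiveCocycle μ T a) {n : ℕ} (hn : 1 ≤ n) (ω : Ω) :
    a n ω ≤ birkhoffSum T (a 1) n ω := by
  induction n, hn using Nat.le_induction with
  | base => rw [birkhoffSum_one]
  | succ n _ ih =>
    rw [birkhoffSum_succ]
    linarith [ha.add_le n 1 ω]

theorem mul_le_add_birkhoffSum_add (ha : IsSubadditiveCocycle μ T a) (s n : ℕ) (ω : Ω) :
    s * a (n + s) ω ≤ ∑ r ∈ Finset.range s, a r ω + birkhoffSum T (a s) n ω
      + ∑ r ∈ Finset.range s, a (s - r) (T^[r] (T^[n] ω)) := by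
  have hsplit {r : ℕ} (hr : r ∈ Finset.range s) :
      a (n + s) ω ≤ a (n + r) ω + a (s - r) (T^[r] (T^[n] ω)) := by
    rw [← Function.iterate_add_apply, add_comm r n]
    simpa only [add_assoc, Nat.add_sub_cancel' (Finset.mem_range.1 hr).le]
      using ha.add_le (n + r) (s - r) ω
  calc s * a (n + s) ω = ∑ _r ∈ Finset.range s, a (n + s) ω := by simp
    _ ≤ ∑ r ∈ Finset.range s, (a (n + r) ω + a (s - r) (T^[r] (T^[n] ω))) :=
        Finset.sum_le_sum fun _ hr => hsplit hr
    _ ≤ _ := by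
        rw [Finset.sum_add_distrib]
        gcongr
        exact sum_range_add_le_of_add_le (F := (a · ω)) (fun n => ha.add_le n s ω) n

variable [IsProbabilityMeasure μ]

theorem ae_eventually_div_lt_of_integral_div_lt (ha : IsSubadditiveCocycle μ T a)
    (hT : Ergodic T μ) {s : ℕ} (hs : 0 < s) :
    ∀ᵐ ω ∂μ, ∀ B > (∫ ω, a s ω ∂μ) / s, ∀ᶠ n : ℕ in atTop, a n ω / n < B := by
  have htail : Integrable (fun ω => ∑ r ∈ Finset.range s, a (s - r) (T^[r] ω)) μ :=
    integrable_finsetSum _ fun r _ =>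
      (hT.toMeasurePreserving.iterate r).integrable_comp_of_integrable (ha.integrable _)
  filter_upwards [ae_tendsto_birkhoffSum_div hT (ha.integrable s),
    ae_tendsto_comp_iterate_div hT htail] with ω hsum htail B hB
  have hs' : (0 : ℝ) < s := by exact_mod_cast hs
  have hlim := (((tendsto_const_div_atTop_nhds_zero_nat (∑ r ∈ Finset.range s, a r ω)).add
    hsum).add htail).div_const (s : ℝ) |>.mul (tendsto_natCast_div_add_atTop (s : ℝ))
  rw [zero_add, add_zero, mul_one] at hlim
  rw [← map_add_atTop_eq_nat s, eventually_map]
  filter_upwards [eventually_gt_atTop 0, hlim.eventually_lt_const hB] with n hn hlt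
  have hn' : (0 : ℝ) < n := by exact_mod_cast hn
  refine lt_of_le_of_lt ?_ hlt
  rw [← add_div, ← add_div, div_right_comm, div_mul_div_cancel₀ hn'.ne', Nat.cast_add]
  gcongr
  exact (le_div_iff₀' hs').2 (ha.mul_le_add_birkhoffSum_add s n ω)

theorem ae_eventually_div_lt (ha : IsSubadditiveCocycle μ T a) (hT : Ergodic T μ)
    (hA : IsMeanGrowthRate μ a A) :
    ∀ᵐ ω ∂μ, ∀ B > A, ∀ᶠ n : ℕ in atTop, a n ω / n < B := by
  filter_upwards [ae_all_iff.2 fun s : {n : ℕ // 0 < n} =>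
    ha.ae_eventually_div_lt_of_integral_div_lt hT s.2] with ω hω B hB
  obtain ⟨_, ⟨s, rfl⟩, hs⟩ := (isGLB_lt_iff hA).1 hB
  exact hω s B hs

theorem tendsto_integral_excess (ha : IsSubadditiveCocycle μ T a) (hT : Ergodic T μ)
    (hA : IsMeanGrowthRate μ a A) :
    Tendsto (fun s : ℕ => ∫ ω, max (a s ω / s - A) 0 ∂μ) atTop (𝓝 0) := by
  have habs : Integrable (fun ω => |a 1 ω|) μ := (ha.integrable 1).abs
  have hsum (s : ℕ) : Integrable (fun ω => birkhoffSum T (fun ω => |a 1 ω|) s ω / s) μ :=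
    (integrable_birkhoffSum hT.toMeasurePreserving habs s).div_const _
  refine tendsto_integral_zero_of_le_of_tendsto_integral
    (Y := fun s ω => birkhoffSum T (fun ω => |a 1 ω|) s ω / s + |A|)
    (y := fun _ => ∫ ω, |a 1 ω| ∂μ + |A|)
    (fun s => (((ha.integrable s).div_const _).sub (integrable_const _)).sup (integrable_const _))
    (fun s => (hsum s).add (integrable_const _)) (integrable_const _)
    (fun _ _ => le_max_right _ _) (fun s ω => ?_) ?_ ?_ ?_
  · have hnonneg : 0 ≤ birkhoffSum T (fun ω => |a 1 ω|) s ω / s :=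
      div_nonneg (Finset.sum_nonneg fun _ _ => abs_nonneg _) s.cast_nonneg
    refine max_le ?_ (add_nonneg hnonneg (abs_nonneg A))
    refine (sub_eq_add_neg _ _).trans_le (add_le_add ?_ (neg_le_abs A))
    obtain rfl | hs := s.eq_zero_or_pos
    · simp
    · gcongr
      exact (ha.le_birkhoffSum hs ω).trans (Finset.sum_le_sum fun _ _ => le_abs_self _)
  · filter_upwards [ha.ae_eventually_div_lt hT hA] with ω hω
    refine tendsto_order.2 ⟨fun B hB => .of_forall fun s => hB.trans_le (le_max_right _ _),
      fun B hB => ?_⟩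
    filter_upwards [hω (A + B) (lt_add_of_pos_right A hB)] with s hs
    exact max_lt (by linarith) hB
  · filter_upwards [ae_tendsto_birkhoffSum_div hT habs] with ω hω using hω.add_const _
  · refine tendsto_const_nhds.congr' ?_
    filter_upwards [eventually_gt_atTop 0] with s hs
    have hs' : (s : ℝ) ≠ 0 := by exact_mod_cast hs.ne'
    rw [integral_add (hsum s) (integrable_const _), integral_div,
      integral_birkhoffSum hT.toMeasurePreserving habs, mul_div_cancel_left₀ _ hs']
    simp only [integral_const, probReal_univ, one_smul]

end IsSubadditiveCocycle

end SubadditiveCocycle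

section Envelope

variable {Ω : Type*}

/-- The largest of the values obtained from `a n ω` by counting `b` for each of the first `k` blocks
of length `s` and `a` for the remaining time, over all `k` with `s * k ≤ n`. -/
noncomputable def envelope (T : Ω → Ω) (a : ℕ → Ω → ℝ) (s : ℕ) (b : ℝ) (n : ℕ) : Ω → ℝ :=
  (Finset.range (n / s + 1)).sup' Finset.nonempty_range_add_one fun k ω =>
    b * k + a (n - s * k) (T^[s * k] ω)

variable {T : Ω → Ω} {a : ℕ → Ω → ℝ} {s : ℕ} {b : ℝ}

theorem add_le_envelope (hs : 0 < s) {n k : ℕ} (hk : s * k ≤ n) (ω : Ω) :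
    b * k + a (n - s * k) (T^[s * k] ω) ≤ envelope T a s b n ω :=
  Finset.le_sup' (fun (k : ℕ) ω => b * k + a (n - s * k) (T^[s * k] ω))
    (Finset.mem_range_succ_iff.2 ((Nat.le_div_iff_mul_le hs).2 (mul_comm s k ▸ hk))) ω

theorem le_envelope (n : ℕ) : a n ≤ envelope T a s b n :=
  Finset.le_sup'_of_le _ (Finset.mem_range.2 (n / s).succ_pos) (by simp)

theorem envelope_add_le (hs : 0 < s) (n : ℕ) (ω : Ω) :
    envelope T a s b (n + s) ω ≤ max (a (n + s) ω) (b + envelope T a s b n (T^[s] ω)) := by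
  rw [envelope, Finset.sup'_apply]
  refine Finset.sup'_le _ _ fun k hk => ?_
  rw [Finset.mem_range_succ_iff, Nat.le_div_iff_mul_le hs, mul_comm] at hk
  cases k with
  | zero => exact le_max_of_le_left (by simp)
  | succ k =>
    rw [mul_add, mul_one, add_le_add_iff_right] at hk
    rw [mul_add, mul_one, Nat.add_sub_add_right, Function.iterate_add_apply]
    refine le_max_of_le_right ?_
    push_cast
    linarith [add_le_envelope (T := T) (a := a) (b := b) hs hk (T^[s] ω)]

variable [MeasurableSpace Ω] {μ : Measure Ω}

theorem measurable_envelope (hT : Measurable T) (ha : ∀ n, Measurable (a n)) (n : ℕ) :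
    Measurable (envelope T a s b n) :=
  Finset.measurable_sup' _ fun _ _ => ((ha _).comp (hT.iterate _)).const_add _

theorem integrable_envelope [IsFiniteMeasure μ] (hT : MeasurePreserving T μ μ)
    (ha : ∀ n, Integrable (a n) μ) (n : ℕ) : Integrable (envelope T a s b n) μ :=
  Finset.sup'_induction _ _ (p := (Integrable · μ)) (fun _ hu _ hv => hu.sup hv) fun _ _ =>
    (integrable_const _).add ((hT.iterate _).integrable_comp_of_integrable (ha _))

end Envelope

namespace IsSubadditiveCocycle

variable {Ω : Type*} [MeasurableSpace Ω] {μ : Measure Ω} {T : Ω → Ω} {a : ℕ → Ω → ℝ} {A : ℝ}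

theorem envelope_add_indicator_le (ha : IsSubadditiveCocycle μ T a) {s : ℕ} (hs : 0 < s)
    (b v : ℝ) (n : ℕ) (ω : Ω) :
    envelope T a s b (n + s) ω
        + {ω | a (n + s) ω < envelope T a s b (n + s) ω}.indicator (fun _ => v - b) ω
      ≤ envelope T a s b n (T^[s] ω) + max (a s ω) v := by
  by_cases hω : a (n + s) ω < envelope T a s b (n + s) ω
  · have hle : envelope T a s b (n + s) ω ≤ b + envelope T a s b n (T^[s] ω) :=
      (le_max_iff.1 (envelope_add_le hs n ω)).resolve_left hω.not_ge
    rw [Set.indicator_of_mem (Set.mem_ofPred_eq ▸ hω)]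
    linarith [le_max_right (a s ω) v]
  · have hadd := ha.add_le s n ω
    rw [Set.indicator_of_notMem (Set.mem_ofPred_eq ▸ hω)]
    rw [add_comm s n] at hadd
    linarith [le_max_left (a s ω) v, le_envelope (T := T) (a := a) (s := s) (b := b) n (T^[s] ω)]

variable [IsProbabilityMeasure μ]

theorem integral_envelope_add_le (ha : IsSubadditiveCocycle μ T a) (hT : MeasurePreserving T μ μ)
    {s : ℕ} (hs : 0 < s) (b v : ℝ) (n : ℕ) :
    ∫ ω, envelope T a s b (n + s) ω ∂μ
        + (v - b) * μ.real {ω | a (n + s) ω < envelope T a s b (n + s) ω}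
      ≤ ∫ ω, envelope T a s b n ω ∂μ + ∫ ω, max (a s ω) v ∂μ := by
  have henv := integrable_envelope (s := s) (b := b) hT ha.integrable
  have henv_comp : Integrable (fun ω => envelope T a s b n (T^[s] ω)) μ :=
    (hT.iterate s).integrable_comp_of_integrable (henv n)
  have hmax : Integrable (fun ω => max (a s ω) v) μ := (ha.integrable s).sup (integrable_const v)
  have hset : MeasurableSet {ω | a (n + s) ω < envelope T a s b (n + s) ω} :=
    measurableSet_lt (ha.measurable _) (measurable_envelope hT.measurable ha.measurable _)
  have hind := (integrable_const (v - b)).indicator (μ := μ) hset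
  rw [← integral_comp_measurePreserving (hT.iterate s) (henv n).aestronglyMeasurable, mul_comm,
    ← smul_eq_mul, ← integral_indicator_const _ hset, ← integral_add (henv _) hind,
    ← integral_add henv_comp hmax]
  exact integral_mono ((henv _).add hind) (henv_comp.add hmax)
    (ha.envelope_add_indicator_le hs b v n)

theorem exists_sum_measureReal_lt_envelope_le (ha : IsSubadditiveCocycle μ T a)
    (hT : MeasurePreserving T μ μ) (hA : IsMeanGrowthRate μ a A) {s : ℕ} (hs : 0 < s) {ε : ℝ}
    (hε : 0 < ε) :
    ∃ C : ℝ, ∀ N : ℕ,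
      ∑ n ∈ Finset.range N, μ.real {ω | a n ω < envelope T a s ((A - ε) * s) n ω}
        ≤ N * ((∫ ω, max (a s ω / s - A) 0 ∂μ) / ε) + C := by
  set p : ℕ → ℝ := fun n => μ.real {ω | a n ω < envelope T a s ((A - ε) * s) n ω}
  set E : ℕ → ℝ := fun n => ∫ ω, envelope T a s ((A - ε) * s) n ω ∂μ
  set e := ∫ ω, max (a s ω / s - A) 0 ∂μ
  have hs' : (0 : ℝ) < s := by exact_mod_cast hs
  have hstep (n : ℕ) : E (n + s) ≤ E n + (A * s + s * e - ε * s * p (n + s)) := by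
    have := ha.integral_envelope_add_le hT hs ((A - ε) * s) (A * s) n
    rw [integral_max_mul (ha.integrable s) A hs', ← sub_mul, sub_sub_cancel] at this
    linarith
  have hlower (n : ℕ) : A * n ≤ E n :=
    (ha.mul_le_integral hA n).trans (integral_mono (ha.integrable n)
      (integrable_envelope hT ha.integrable n) (le_envelope n))
  refine ⟨s + (∑ r ∈ Finset.range s, (E r - A * r)) / (ε * s), fun N => ?_⟩
  have hsum : ε * s * ∑ n ∈ Finset.range N, p (n + s)
      ≤ N * (s * e) + ∑ r ∈ Finset.range s, (E r - A * r) := by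
    have htelescope := sum_range_add_le_of_add_le hstep N
    have hsum_lower := Finset.sum_le_sum fun r (_ : r ∈ Finset.range s) => hlower (N + r)
    simp only [Nat.cast_add, mul_add, Finset.sum_add_distrib, Finset.sum_sub_distrib,
      Finset.sum_const, Finset.card_range, nsmul_eq_mul, ← Finset.mul_sum] at *
    linarith
  have hinit : ∑ n ∈ Finset.range s, p n ≤ s := by
    simpa using Finset.sum_le_sum fun n (_ : n ∈ Finset.range s) =>
      (measureReal_le_one : p n ≤ 1)
  calc ∑ n ∈ Finset.range N, p n ≤ ∑ n ∈ Finset.range (s + N), p n :=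
        Finset.sum_le_sum_of_subset_of_nonneg (Finset.range_mono (Nat.le_add_left N s))
          fun _ _ _ => measureReal_nonneg
    _ = ∑ n ∈ Finset.range s, p n + ∑ n ∈ Finset.range N, p (n + s) := by
        rw [Finset.sum_range_add]
        simp only [add_comm s]
    _ ≤ s + (N * (s * e) + ∑ r ∈ Finset.range s, (E r - A * r)) / (ε * s) :=
        add_le_add hinit ((le_div_iff₀' (by positivity)).2 hsum)
    _ = N * (e / ε) + (s + (∑ r ∈ Finset.range s, (E r - A * r)) / (ε * s)) := by
        field_simp
        ring

end IsSubadditiveCocycle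

section GoodTimes

variable {Ω : Type*} [MeasurableSpace Ω] {μ : Measure Ω}

theorem measureReal_le_of_forall_subset_of_sum_le [IsFiniteMeasure μ] {B : ℕ → Set Ω}
    {F : Set Ω} {I : ℕ} (hF : ∀ n ≥ I, F ⊆ B n) {δ C : ℝ}
    (hB : ∀ N : ℕ, ∑ n ∈ Finset.range N, μ.real (B n) ≤ N * δ + C) : μ.real F ≤ δ := by
  have hcount (N : ℕ) : N * μ.real F ≤ I * μ.real F + (N * δ + C) :=
    calc N * μ.real F ≤ (I + (N - I : ℕ)) * μ.real F := by
          gcongr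
          exact_mod_cast Nat.sub_le_iff_le_add'.1 le_rfl
      _ = I * μ.real F + ∑ _n ∈ Finset.Ico I N, μ.real F := by
          rw [Finset.sum_const, Nat.card_Ico, nsmul_eq_mul, add_mul]
      _ ≤ I * μ.real F + ∑ n ∈ Finset.Ico I N, μ.real (B n) := by
          gcongr with n hn
          · exact measure_ne_top μ _
          · exact hF n (Finset.mem_Ico.1 hn).1
      _ ≤ I * μ.real F + ∑ n ∈ Finset.range N, μ.real (B n) := by
          gcongr
          exact fun n hn => Finset.mem_range.2 (Finset.mem_Ico.1 hn).2
      _ ≤ I * μ.real F + (N * δ + C) := by gcongr; exact hB N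
  by_contra! hlt
  obtain ⟨N, hN⟩ := exists_nat_gt ((I * μ.real F + C) / (μ.real F - δ))
  rw [div_lt_iff₀ (sub_pos.2 hlt)] at hN
  linarith [hcount N]

theorem ae_exists_forall_exists_ge_notMem [IsFiniteMeasure μ] {B : ℕ → ℕ → Set Ω} {δ C : ℕ → ℝ}
    (hδ : Summable δ)
    (hB : ∀ i N : ℕ, ∑ n ∈ Finset.range N, μ.real (B i n) ≤ N * δ i + C i) :
    ∀ᵐ ω ∂μ, ∃ m, ∀ I, ∃ n ≥ I, ∀ i ∈ Finset.Ico m I, ω ∉ B i n := by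
  have hδ_nonneg (i : ℕ) : 0 ≤ δ i :=
    measureReal_nonneg.trans (measureReal_le_of_forall_subset_of_sum_le (F := ∅) (I := 0)
      (fun _ _ => Set.empty_subset _) (hB i))
  set F : ℕ → ℕ → Set Ω := fun m I => {ω | ∀ n ≥ I, ∃ i ∈ Finset.Ico m I, ω ∈ B i n}
  have hF_real (m I : ℕ) : μ.real (F m I) ≤ ∑' k, δ (k + m) := by
    have hunion (N : ℕ) :
        ∑ n ∈ Finset.range N, μ.real (⋃ i ∈ Finset.Ico m I, B i n)
          ≤ N * ∑ i ∈ Finset.Ico m I, δ i + ∑ i ∈ Finset.Ico m I, C i :=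
      calc _ ≤ ∑ n ∈ Finset.range N, ∑ i ∈ Finset.Ico m I, μ.real (B i n) :=
            Finset.sum_le_sum fun _ _ => measureReal_biUnion_finset_le _ _
        _ ≤ ∑ i ∈ Finset.Ico m I, (N * δ i + C i) := by
            rw [Finset.sum_comm]
            exact Finset.sum_le_sum fun i _ => hB i N
        _ = _ := by rw [Finset.sum_add_distrib, Finset.mul_sum]
    have hsubset : ∀ n ≥ I, F m I ⊆ ⋃ i ∈ Finset.Ico m I, B i n := fun n hn ω hω =>
      Set.mem_iUnion₂.2 ((hω n hn).imp fun _ hi => ⟨hi.1, hi.2⟩)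
    refine (measureReal_le_of_forall_subset_of_sum_le hsubset hunion).trans ?_
    rw [Finset.sum_Ico_eq_sum_range]
    simp only [add_comm m]
    exact ((summable_nat_add_iff m).2 hδ).sum_le_tsum _ fun k _ => hδ_nonneg _
  have hF_mono (m : ℕ) : Monotone (F m) := fun I J hIJ ω hω n hn =>
    (hω n (hIJ.trans hn)).imp fun _ hi => ⟨Finset.Ico_subset_Ico_right hIJ hi.1, hi.2⟩
  have hF_measure (m : ℕ) : μ (⋃ I, F m I) ≤ ENNReal.ofReal (∑' k, δ (k + m)) := by
    rw [(hF_mono m).measure_iUnion]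
    refine iSup_le fun I => ?_
    rw [← ofReal_measureReal]
    exact ENNReal.ofReal_le_ofReal (hF_real m I)
  have hlim : Tendsto (fun m : ℕ => ENNReal.ofReal (∑' k, δ (k + m))) atTop (𝓝 0) := by
    simpa only [ENNReal.ofReal_zero] using ENNReal.tendsto_ofReal (tendsto_sum_nat_add δ)
  refine ae_iff.2 (le_antisymm
    (ge_of_tendsto' hlim fun m => (measure_mono fun ω hω => ?_).trans (hF_measure m)) zero_le)
  simpa [F, and_assoc] using not_exists.1 hω m

theorem measurable_comp_countable_index {ι β : Type*} [Countable ι] [MeasurableSpace ι]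
    [MeasurableSingletonClass ι] [MeasurableSpace β] {F : ι → Ω → β} (hF : ∀ i, Measurable (F i))
    {N : Ω → ι} (hN : Measurable N) : Measurable fun ω => F (N ω) ω :=
  (measurable_from_prod_countable_right (f := fun p : ι × Ω => F p.1 p.2) hF).comp
    (hN.prodMk measurable_id)

theorem exists_measurable_forall_mem_of_monotone {P : ℕ → ℕ → Set Ω}
    (hP : ∀ m n, MeasurableSet (P m n)) (hmono : ∀ n, Monotone (P · n))
    (hne : ∀ ω, ∃ m n, ω ∈ P m n) :
    ∃ τ : Ω → ℕ, Measurable τ ∧ ∀ ω m n, ω ∈ P m n → ω ∈ P m (τ ω) := by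
  classical
  have hmin : Measurable fun ω => Nat.find (hne ω) :=
    measurable_find hne fun m => by
      simpa only [Set.ofPred_exists, Set.ofPred_mem_eq] using MeasurableSet.iUnion (hP m)
  have hex (ω : Ω) : ∃ n, ω ∈ P (Nat.find (hne ω)) n := Nat.find_spec (hne ω)
  refine ⟨fun ω => Nat.find (hex ω), measurable_find hex fun n => ?_, fun ω m n hω => ?_⟩
  · exact measurableSet_setOfPred.2 (measurable_comp_countable_index
      (F := fun m ω => ω ∈ P m n) (fun m => measurableSet_setOfPred.1 (hP m n)) hmin)
  · exact hmono _ (Nat.find_min' (hne ω) ⟨n, hω⟩) (Nat.find_spec (hex ω))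

theorem exists_measurable_times {G : ℕ → ℕ → Set Ω} (hG : ∀ i n, MeasurableSet (G i n)) :
    ∃ τ : ℕ → Ω → ℕ, (∀ I, Measurable (τ I)) ∧ (∀ I ω, I ≤ τ I ω) ∧
      ∀ ω m, (∀ I, ∃ n ≥ I, ∀ i ∈ Finset.Ico m I, ω ∈ G i n) →
        ∀ I, ∀ i ∈ Finset.Ico m I, ω ∈ G i (τ I ω) := by
  set P : ℕ → ℕ → ℕ → Set Ω := fun I m n => {ω | n ≥ I ∧ ∀ i ∈ Finset.Ico m I, ω ∈ G i n}
  have hP (I m n : ℕ) : MeasurableSet (P I m n) := by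
    have : P I m n = {_ω | n ≥ I} ∩ ⋂ i ∈ Finset.Ico m I, G i n := by ext; simp [P]
    exact this ▸ (MeasurableSet.const _).inter
      (Finset.measurableSet_biInter _ fun i _ => hG i n)
  have hP_mono (I n : ℕ) : Monotone (P I · n) := fun m m' hm ω hω =>
    ⟨hω.1, fun i hi => hω.2 i (Finset.Ico_subset_Ico_left hm hi)⟩
  have hP_self (I : ℕ) (ω : Ω) : ω ∈ P I I I := ⟨le_rfl, by simp⟩
  choose τ hτ_meas hτ using fun I => exists_measurable_forall_mem_of_monotone (hP I) (hP_mono I)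
    fun ω => ⟨I, I, hP_self I ω⟩
  refine ⟨τ, hτ_meas, fun I ω => (hτ I ω I I (hP_self I ω)).1, fun ω m hω I => ?_⟩
  obtain ⟨n, hn⟩ := hω I
  exact (hτ I ω m n hn).2

theorem IsSubadditiveCocycle.exists_measurable_good_times [IsProbabilityMeasure μ] {T : Ω → Ω}
    {a : ℕ → Ω → ℝ} {A : ℝ} (ha : IsSubadditiveCocycle μ T a) (hT : Ergodic T μ)
    (hA : IsMeanGrowthRate μ a A) {ε : ℕ → ℝ} (hε : ∀ i, 0 < ε i) :
    ∃ (s : ℕ → ℕ) (τ : ℕ → Ω → ℕ), (∀ i, 0 < s i) ∧ (∀ I, Measurable (τ I)) ∧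
      (∀ I ω, I ≤ τ I ω) ∧ ∀ᵐ ω ∂μ, ∃ m, ∀ I, ∀ i ∈ Finset.Ico m I,
        envelope T a (s i) ((A - ε i) * s i) (τ I ω) ω ≤ a (τ I ω) ω := by
  have hs (i : ℕ) :
      ∃ s : ℕ, 0 < s ∧ (∫ ω, max (a s ω / s - A) 0 ∂μ) / ε i ≤ (1 / 2 : ℝ) ^ i := by
    have hsmall := (ha.tendsto_integral_excess hT hA).eventually_le_const
      (show 0 < (1 / 2 : ℝ) ^ i * ε i from mul_pos (by positivity) (hε i))
    obtain ⟨s, hs, hle⟩ := ((eventually_gt_atTop 0).and hsmall).exists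
    exact ⟨s, hs, (div_le_iff₀ (hε i)).2 hle⟩
  choose s hs_pos hs_excess using hs
  set B : ℕ → ℕ → Set Ω := fun i n => {ω | a n ω < envelope T a (s i) ((A - ε i) * s i) n ω}
  have hB_meas (i n : ℕ) : MeasurableSet (B i n) :=
    measurableSet_lt (ha.measurable n) (measurable_envelope hT.measurable ha.measurable n)
  choose C hC using fun i =>
    ha.exists_sum_measureReal_lt_envelope_le hT.toMeasurePreserving hA (hs_pos i) (hε i)
  have hB_sum (i N : ℕ) :
      ∑ n ∈ Finset.range N, μ.real (B i n) ≤ N * (1 / 2 : ℝ) ^ i + C i :=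
    (hC i N).trans (by gcongr; exact hs_excess i)
  obtain ⟨τ, hτ_meas, hτ_ge, hτ⟩ := exists_measurable_times fun i n => (hB_meas i n).compl
  refine ⟨s, τ, hs_pos, hτ_meas, hτ_ge, ?_⟩
  filter_upwards [ae_exists_forall_exists_ge_notMem summable_geometric_two hB_sum] with ω ⟨m, hm⟩
  exact ⟨m, fun I i hi => not_lt.1 (hτ ω m hm I i hi)⟩

end GoodTimes

section MeasurableExtraction

variable {Ω : Type*} [MeasurableSpace Ω]

theorem exists_measurableSet_frequently_mem_eq {κ : ℕ → Ω → ℕ} (hκ : ∀ n, Measurable (κ n))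
    (hfin : ∀ ω, (Set.range (κ · ω)).Finite) {S : ℕ → Set Ω} (hS : ∀ n, MeasurableSet (S n))
    (hfreq : ∀ ω, ∃ᶠ n in atTop, ω ∈ S n) :
    ∃ S' : ℕ → Set Ω, (∀ n, MeasurableSet (S' n)) ∧ (∀ ω, ∃ᶠ n in atTop, ω ∈ S' n) ∧
      (∀ n, S' n ⊆ S n) ∧ ∀ ω n n', ω ∈ S' n → ω ∈ S' n' → κ n ω = κ n' ω := by
  classical
  have hex (ω : Ω) : ∃ c, ∃ᶠ n in atTop, ω ∈ S n ∩ {ω | κ n ω = c} := by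
    by_contra! hrare
    refine hfreq ω ?_
    filter_upwards [(hfin ω).eventually_all.2 fun c _ => hrare c] with n hn hnS
    exact hn _ ⟨n, rfl⟩ ⟨hnS, rfl⟩
  have hmeas (n c : ℕ) : MeasurableSet (S n ∩ {ω | κ n ω = c}) :=
    (hS n).inter (hκ n (measurableSet_singleton c))
  have hfind : Measurable fun ω => Nat.find (hex ω) := by
    refine measurable_find hex fun c => ?_
    simpa only [← mem_limsup_iff_frequently_mem, Set.ofPred_mem_eq] using
      MeasurableSet.measurableSet_limsup (hmeas · c)
  exact ⟨fun n => S n ∩ {ω | κ n ω = Nat.find (hex ω)},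
    fun n => (hS n).inter (measurableSet_eq_fun (hκ n) hfind), fun ω => Nat.find_spec (hex ω),
    fun n => Set.inter_subset_left, fun ω n n' hn hn' => hn.2.trans hn'.2.symm⟩

theorem exists_measurable_diagonal {κ : ℕ → ℕ → Ω → ℕ} (hκ : ∀ k n, Measurable (κ k n))
    (hfin : ∀ k ω, (Set.range (κ k · ω)).Finite) :
    ∃ φ : ℕ → Ω → ℕ, (∀ j, Measurable (φ j)) ∧ (∀ j ω, j ≤ φ j ω) ∧
      ∀ ω k i j, k < i → k < j → κ k (φ i ω) ω = κ k (φ j ω) ω := by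
  classical
  let 𝒮 := {S : ℕ → Set Ω // (∀ n, MeasurableSet (S n)) ∧ ∀ ω, ∃ᶠ n in atTop, ω ∈ S n}
  have hrefine (k : ℕ) (S : 𝒮) : ∃ S' : 𝒮, (∀ n, S'.1 n ⊆ S.1 n) ∧
      ∀ ω n n', ω ∈ S'.1 n → ω ∈ S'.1 n' → κ k n ω = κ k n' ω :=
    have ⟨S', hmeas, hfreq, hS'⟩ :=
      exists_measurableSet_frequently_mem_eq (hκ k) (hfin k) S.2.1 S.2.2
    ⟨⟨S', hmeas, hfreq⟩, hS'⟩
  choose next hsubset hconst using hrefine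
  let S : ℕ → 𝒮 := fun k => Nat.rec
    ⟨fun _ => Set.univ, fun _ => .univ, fun _ => .of_forall fun _ => trivial⟩ next k
  have hanti (n : ℕ) : Antitone fun k => (S k).1 n :=
    antitone_nat_of_succ_le fun k => hsubset k (S k) n
  have hex (j : ℕ) (ω : Ω) : ∃ n, j ≤ n ∧ ω ∈ (S j).1 n :=
    frequently_atTop.1 ((S j).2.2 ω) j
  refine ⟨fun j ω => Nat.find (hex j ω), fun j => measurable_find (hex j) fun n =>
    (MeasurableSet.const _).inter ((S j).2.1 n), fun j ω => (Nat.find_spec (hex j ω)).1,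
    fun ω k i j hi hj => hconst k (S k) ω _ _ ?_ ?_⟩
  · exact hanti _ hi (Nat.find_spec (hex i ω)).2
  · exact hanti _ hj (Nat.find_spec (hex j ω)).2

theorem finite_range_floor_of_abs_le {ι : Type*} {f : ι → ℝ} {C : ℝ} (hf : ∀ i, |f i| ≤ C) :
    (Set.range fun i => ⌊f i⌋).Finite :=
  (Set.finite_Icc ⌊-C⌋ ⌊C⌋).subset <| Set.range_subset_iff.2 fun i =>
    ⟨Int.floor_mono (abs_le.1 (hf i)).1, Int.floor_mono (abs_le.1 (hf i)).2⟩

theorem exists_measurable_forall_cauchySeq {f : ℕ → ℕ → Ω → ℝ}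
    (hf : ∀ k n, Measurable (f k n)) (hbdd : ∀ k ω, ∃ C, ∀ n, |f k n ω| ≤ C) :
    ∃ φ : ℕ → Ω → ℕ, (∀ j, Measurable (φ j)) ∧ (∀ j ω, j ≤ φ j ω) ∧
      ∀ k ω, CauchySeq fun j => f k (φ j ω) ω := by
  set κ : ℕ → ℕ → Ω → ℕ := fun p n ω =>
    Encodable.encode ⌊f p.unpair.1 n ω * (p.unpair.2 + 1)⌋
  have hκ (p n : ℕ) : Measurable (κ p n) :=
    measurable_from_top.comp (Int.measurable_floor.comp ((hf _ n).mul_const _))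
  have hfin (p : ℕ) (ω : Ω) : (Set.range (κ p · ω)).Finite := by
    obtain ⟨C, hC⟩ := hbdd p.unpair.1 ω
    have hbound (n : ℕ) :
        |f p.unpair.1 n ω * (p.unpair.2 + 1)| ≤ C * |(p.unpair.2 + 1 : ℝ)| := by
      rw [abs_mul]
      gcongr
      exact hC n
    refine ((finite_range_floor_of_abs_le hbound).image Encodable.encode).subset ?_
    exact (Set.range_comp Encodable.encode _).subset
  obtain ⟨φ, hφ_meas, hφ_ge, hφ⟩ := exists_measurable_diagonal hκ hfin
  refine ⟨φ, hφ_meas, hφ_ge, fun k ω => Metric.cauchySeq_iff.2 fun δ hδ => ?_⟩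
  obtain ⟨r, hr⟩ := exists_nat_one_div_lt hδ
  refine ⟨Nat.pair k r + 1, fun i hi j hj => ?_⟩
  have hfloor := Encodable.encode_injective (hφ ω (Nat.pair k r) i j hi hj)
  rw [Nat.unpair_pair] at hfloor
  have hlt := Int.abs_sub_lt_one_of_floor_eq_floor hfloor
  rw [← sub_mul, abs_mul, abs_of_pos (by positivity : (0 : ℝ) < r + 1),
    ← lt_div_iff₀ (by positivity)] at hlt
  exact hlt.trans hr

theorem cauchySeq_apply_of_dense {X : Type*} [PseudoMetricSpace X] {u : ℕ → X → ℝ}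
    (hu : ∀ n, LipschitzWith 1 (u n)) {D : Set X} (hD : Dense D)
    (hcauchy : ∀ y ∈ D, CauchySeq (u · y)) (y : X) : CauchySeq (u · y) := by
  refine Metric.cauchySeq_iff.2 fun δ hδ => ?_
  obtain ⟨z, hzD, hz⟩ := hD.exists_dist_lt y (show 0 < δ / 3 by positivity)
  obtain ⟨N, hN⟩ := Metric.cauchySeq_iff.1 (hcauchy z hzD) (δ / 3) (by positivity)
  refine ⟨N, fun i hi j hj => ?_⟩
  have hyz (n : ℕ) : dist (u n y) (u n z) ≤ dist y z := by
    simpa only [NNReal.coe_one, one_mul] using (hu n).dist_le_mul y z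
  calc dist (u i y) (u j y)
      ≤ dist (u i y) (u i z) + dist (u i z) (u j z) + dist (u j z) (u j y) :=
        dist_triangle4 _ _ _ _
    _ < δ / 3 + δ / 3 + δ / 3 := by
        have hi' := (hyz i).trans_lt hz
        have hj' := (dist_comm (u j z) (u j y) ▸ hyz j).trans_lt hz
        gcongr
        exact hN i hi j hj
    _ = δ := by ring

theorem exists_measurable_subseq_limit {X : Type*} [PseudoMetricSpace X]
    [TopologicalSpace.SeparableSpace X] {u : ℕ → Ω → X → ℝ}
    (hmeas : ∀ n y, Measurable fun ω => u n ω y) (hlip : ∀ n ω, LipschitzWith 1 (u n ω))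
    (hbdd : ∀ ω y, ∃ C, ∀ n, |u n ω y| ≤ C) :
    ∃ (φ : ℕ → Ω → ℕ) (h : Ω → X → ℝ), (∀ j ω, j ≤ φ j ω) ∧
      (∀ y, Measurable fun ω => h ω y) ∧
      ∀ ω, Tendsto (fun j => u (φ j ω) ω) atTop (𝓝 (h ω)) := by
  rcases isEmpty_or_nonempty X with hX | hX
  · exact ⟨fun j _ => j, fun _ => hX.elim, fun _ _ => le_rfl, hX.elim,
      fun ω => tendsto_pi_nhds.2 hX.elim⟩
  obtain ⟨φ, hφ_meas, hφ_ge, hφ⟩ := exists_measurable_forall_cauchySeq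
    (fun k n => hmeas n (TopologicalSpace.denseSeq X k)) fun k ω => hbdd ω _
  have hcauchy (ω : Ω) (y : X) : CauchySeq fun j => u (φ j ω) ω y :=
    cauchySeq_apply_of_dense (fun j => hlip (φ j ω) ω) (TopologicalSpace.denseRange_denseSeq X)
      (Set.forall_mem_range.2 fun k => hφ k ω) y
  choose h hh using fun ω y => cauchySeq_tendsto_of_complete (hcauchy ω y)
  refine ⟨φ, h, hφ_ge, fun y => ?_, fun ω => tendsto_pi_nhds.2 (hh ω)⟩
  exact measurable_of_tendsto_metrizable
    (fun j => measurable_comp_countable_index (F := fun n ω => u n ω y) (hmeas · y) (hφ_meas j))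
    (tendsto_pi_nhds.2 (hh · y))

end MeasurableExtraction

section MetricFunctional

variable {X : Type*} [PseudoMetricSpace X]

/-- The function `Φ(x) = h_x` embedding `X` into its metric bordification: the distance to `x`,
normalised to vanish at `x₀`. -/
def metricFunctional (x₀ x y : X) : ℝ :=
  dist x y - dist x x₀

theorem range_metricFunctional (x₀ : X) :
    Set.range (metricFunctional x₀) = {f | ∃ x, f = fun y => dist x y - dist x x₀} :=
  Set.ext fun _ => exists_congr fun _ => eq_comm

theorem lipschitzWith_metricFunctional (x₀ x : X) : LipschitzWith 1 (metricFunctional x₀ x) :=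
  LipschitzWith.of_le_add fun y z => by
    unfold metricFunctional
    linarith [dist_triangle_right x y z]

variable {x₀ : X} {h : X → ℝ}

theorem lipschitzWith_of_mem_closure_range (hh : h ∈ closure (Set.range (metricFunctional x₀))) :
    LipschitzWith 1 h :=
  closure_minimal (Set.range_subset_iff.2 (lipschitzWith_metricFunctional x₀))
    (isClosed_setOfPred_lipschitzWith 1) hh

theorem apply_base_of_mem_closure_range (hh : h ∈ closure (Set.range (metricFunctional x₀))) :
    h x₀ = 0 :=
  closure_minimal (Set.range_subset_iff.2 fun _ => sub_self _)
    (isClosed_eq (continuous_apply x₀) continuous_const) hh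

theorem abs_apply_le_of_mem_closure_range
    (hh : h ∈ closure (Set.range (metricFunctional x₀))) (y : X) : |h y| ≤ dist y x₀ := by
  simpa [Real.dist_eq, apply_base_of_mem_closure_range hh] using
    (lipschitzWith_of_mem_closure_range hh).dist_le_mul y x₀

theorem notMem_range_metricFunctional_of_tendsto {y : ℕ → X} {l : ℝ} (hl : 0 < l)
    (hlim : Tendsto (fun n : ℕ => -h (y n) / n) atTop (𝓝 l)) :
    h ∉ Set.range (metricFunctional x₀) := by
  rintro ⟨x, rfl⟩
  refine hl.not_ge (le_of_tendsto_of_tendsto' hlim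
    (tendsto_const_div_atTop_nhds_zero_nat (dist x x₀)) fun n => ?_)
  gcongr
  unfold metricFunctional
  linarith [dist_nonneg (x := x) (y := y n)]

end MetricFunctional

section Orbit

theorem measurable_orbitPt {Ω X : Type*} [MeasurableSpace Ω] [MeasurableSpace X] {T : Ω → Ω}
    {g : Ω → X → X} (hT : Measurable T) (hg : Measurable fun p : Ω × X => g p.1 p.2) (x₀ : X)
    (n : ℕ) : Measurable (orbitPt T g x₀ n) := by
  induction n with
  | zero => exact measurable_const
  | succ n ih => exact hg.comp (measurable_id.prodMk (ih.comp hT))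

variable {Ω X : Type*} [PseudoMetricSpace X] {T : Ω → Ω} {g : Ω → X → X}

/-- The distance from the orbit point `g_ω g_{Tω} ⋯ g_{T^{n−1}ω} x₀` to the basepoint `x₀`. -/
noncomputable def displacement (T : Ω → Ω) (g : Ω → X → X) (x₀ : X) (n : ℕ) (ω : Ω) : ℝ :=
  dist (orbitPt T g x₀ n ω) x₀

theorem displacement_nonneg (x₀ : X) (n : ℕ) (ω : Ω) : 0 ≤ displacement T g x₀ n ω :=
  dist_nonneg

theorem dist_orbitPt_add (hg : ∀ ω, Isometry (g ω)) (x₀ : X) (m n : ℕ) (ω : Ω) :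
    dist (orbitPt T g x₀ (m + n) ω) (orbitPt T g x₀ m ω) = displacement T g x₀ n (T^[m] ω) := by
  induction m generalizing ω with
  | zero => simp only [zero_add, orbitPt, Function.iterate_zero, id_eq, displacement]
  | succ m ih =>
    rw [add_right_comm, orbitPt, orbitPt, (hg ω).dist_eq, ih, Function.iterate_succ_apply]

theorem displacement_add_le (hg : ∀ ω, Isometry (g ω)) (x₀ : X) (m n : ℕ) (ω : Ω) :
    displacement T g x₀ (m + n) ω ≤ displacement T g x₀ m ω + displacement T g x₀ n (T^[m] ω) := by
  rw [add_comm (displacement T g x₀ m ω), ← dist_orbitPt_add hg]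
  exact dist_triangle (orbitPt T g x₀ (m + n) ω) _ _

theorem isSubadditiveCocycle_displacement [MeasurableSpace Ω] [MeasurableSpace X]
    [SecondCountableTopology X] [OpensMeasurableSpace X] {μ : Measure Ω}
    (hT : MeasurePreserving T μ μ) (hg : ∀ ω, Isometry (g ω))
    (hg_meas : Measurable fun p : Ω × X => g p.1 p.2) {x₀ : X}
    (hint : Integrable (fun ω => dist (g ω x₀) x₀) μ) :
    IsSubadditiveCocycle μ T (displacement T g x₀) where
  measurable n := (measurable_orbitPt hT.measurable hg_meas x₀ n).dist measurable_const
  integrable n := by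
    induction n with
    | zero => exact (integrable_zero Ω ℝ μ).congr (.of_forall fun _ => (dist_self x₀).symm)
    | succ n ih =>
      refine (hint.add (hT.integrable_comp_of_integrable ih)).mono'
        ((measurable_orbitPt hT.measurable hg_meas x₀ _).dist
          measurable_const).aestronglyMeasurable (.of_forall fun ω => ?_)
      rw [Real.norm_of_nonneg (displacement_nonneg x₀ _ ω), add_comm n]
      exact displacement_add_le hg x₀ 1 n ω
  add_le := displacement_add_le hg x₀

theorem isMeanGrowthRate_displacement [MeasurableSpace Ω] (μ : Measure Ω) (x₀ : X) :
    IsMeanGrowthRate μ (displacement T g x₀)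
      (⨅ N : {n : ℕ // 0 < n}, (∫ ω, displacement T g x₀ N ω ∂μ) / (N : ℕ)) :=
  have : Nonempty {n : ℕ // 0 < n} := ⟨⟨1, one_pos⟩⟩
  isGLB_ciInf ⟨0, Set.forall_mem_range.2 fun _ =>
    div_nonneg (integral_nonneg fun _ => dist_nonneg) (Nat.cast_nonneg _)⟩

theorem metricFunctional_orbitPt_le_of_envelope_le (hg : ∀ ω, Isometry (g ω)) {x₀ : X}
    {s k n : ℕ} (hs : 0 < s) (hk : s * k ≤ n) {b : ℝ} {ω : Ω}
    (hn : envelope T (displacement T g x₀) s b n ω ≤ displacement T g x₀ n ω) :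
    metricFunctional x₀ (orbitPt T g x₀ n ω) (orbitPt T g x₀ (s * k) ω) ≤ -(b * k) := by
  have hdist := dist_orbitPt_add (T := T) hg x₀ (s * k) (n - s * k) ω
  rw [Nat.add_sub_cancel' hk] at hdist
  calc metricFunctional x₀ (orbitPt T g x₀ n ω) (orbitPt T g x₀ (s * k) ω)
      = displacement T g x₀ (n - s * k) (T^[s * k] ω) - displacement T g x₀ n ω :=
        congrArg (· - displacement T g x₀ n ω) hdist
    _ ≤ -(b * k) := by linarith [add_le_envelope hs hk ω |>.trans hn]

theorem mul_le_neg_apply_orbitPt_of_tendsto (hg : ∀ ω, Isometry (g ω)) {x₀ : X} {h : X → ℝ}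
    {N : ℕ → ℕ} {ω : Ω} (hN : Tendsto N atTop atTop)
    (hh : Tendsto (fun j => metricFunctional x₀ (orbitPt T g x₀ (N j) ω)) atTop (𝓝 h))
    {s : ℕ} (hs : 0 < s) {b : ℝ} (hb : ∀ᶠ j in atTop,
      envelope T (displacement T g x₀) s b (N j) ω ≤ displacement T g x₀ (N j) ω) (k : ℕ) :
    b * k ≤ -h (orbitPt T g x₀ (s * k) ω) := by
  refine le_neg.2 (le_of_tendsto (tendsto_pi_nhds.1 hh _) ?_)
  filter_upwards [hb, hN.eventually_ge_atTop (s * k)] with j hj hk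
  exact metricFunctional_orbitPt_le_of_envelope_le hg hs hk hj

theorem neg_apply_orbitPt_add_sub_le (hg : ∀ ω, Isometry (g ω)) (x₀ : X) {h : X → ℝ}
    (hh : LipschitzWith 1 h) {n r s : ℕ} (hr : r ≤ s) (ω : Ω) :
    -h (orbitPt T g x₀ (n + r) ω) - -h (orbitPt T g x₀ n ω) ≤
      ∑ r ∈ Finset.range (s + 1), displacement T g x₀ r (T^[n] ω) :=
  calc _ = h (orbitPt T g x₀ n ω) - h (orbitPt T g x₀ (n + r) ω) := neg_sub_neg _ _
    _ ≤ dist (h (orbitPt T g x₀ (n + r) ω)) (h (orbitPt T g x₀ n ω)) :=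
        (le_abs_self _).trans_eq (abs_sub_comm _ _)
    _ ≤ dist (orbitPt T g x₀ (n + r) ω) (orbitPt T g x₀ n ω) := by
        simpa only [NNReal.coe_one, one_mul] using hh.dist_le_mul _ _
    _ = displacement T g x₀ r (T^[n] ω) := dist_orbitPt_add hg x₀ n r ω
    _ ≤ _ := Finset.single_le_sum (f := fun r => displacement T g x₀ r (T^[n] ω))
        (fun _ _ => dist_nonneg) (Finset.mem_range_succ_iff.2 hr)

end Orbit

section Interpolation

variable {H : ℕ → ℝ}

theorem eventually_lt_div_of_forall_le_mul {c : ℝ} {s : ℕ} (hs : 0 < s)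
    (hH : ∀ k : ℕ, c * s * k ≤ H (s * k)) {w : ℕ → ℝ}
    (hw : Tendsto (fun n : ℕ => w n / n) atTop (𝓝 0))
    (hosc : ∀ n, ∀ r ≤ s, H (n + r) - H n ≤ w n) {B : ℝ} (hB : B < c) :
    ∀ᶠ n : ℕ in atTop, B < H n / n := by
  have hlower (n : ℕ) : c * n - |c| * s - w n ≤ H n := by
    have hdiv := Nat.div_add_mod n s
    have hmod := Nat.mod_lt n hs
    have hround : s * (n / s + 1) = n + (s - n % s) := by
      rw [mul_add, mul_one]
      omega
    have hcast : (s : ℝ) * (n / s + 1 : ℕ) = n + (s - n % s : ℕ) := by exact_mod_cast hround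
    have hgrow := hH (n / s + 1)
    rw [mul_assoc, hcast, hround] at hgrow
    have hshift : |c * (s - n % s : ℕ)| ≤ |c| * s := by
      rw [abs_mul, Nat.abs_cast]
      gcongr
      exact Nat.sub_le _ _
    linarith [hosc n _ (Nat.sub_le s (n % s)), (abs_le.1 hshift).1]
  have hlim : Tendsto (fun n : ℕ => c - |c| * s / n - w n / n) atTop (𝓝 c) := by
    simpa only [sub_zero] using
      (tendsto_const_nhds.sub (tendsto_const_div_atTop_nhds_zero_nat (|c| * s))).sub hw
  filter_upwards [hlim.eventually_const_lt hB, eventually_gt_atTop 0] with n hBn hn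
  have hn' : (n : ℝ) ≠ 0 := by positivity
  refine hBn.trans_le ?_
  calc c - |c| * s / n - w n / n = (c * n - |c| * s - w n) / n := by field_simp
    _ ≤ H n / n := by gcongr; exact hlower n

theorem eventually_lt_div_of_forall_sub_le_mul {A : ℝ} {ε : ℕ → ℝ} (hε : Tendsto ε atTop (𝓝 0))
    {s : ℕ → ℕ} (hs : ∀ i, 0 < s i) {m : ℕ}
    (hH : ∀ i ≥ m, ∀ k : ℕ, (A - ε i) * s i * k ≤ H (s i * k)) {w : ℕ → ℕ → ℝ}
    (hw : ∀ i, Tendsto (fun n : ℕ => w i n / n) atTop (𝓝 0))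
    (hosc : ∀ i n, ∀ r ≤ s i, H (n + r) - H n ≤ w i n) {B : ℝ} (hB : B < A) :
    ∀ᶠ n : ℕ in atTop, B < H n / n := by
  obtain ⟨i, hi, him⟩ :=
    ((hε.eventually_lt_const (sub_pos.2 hB)).and (eventually_ge_atTop m)).exists
  exact eventually_lt_div_of_forall_le_mul (hs i) (hH i him) (hw i) (hosc i) (lt_sub_comm.1 hi)

end Interpolation

section NoncommutativeErgodicTheorem

variable {Ω : Type*} [MeasurableSpace Ω] {μ : Measure Ω} [IsProbabilityMeasure μ]
  {T : Ω → Ω} {X : Type*} [PseudoMetricSpace X] [SecondCountableTopology X] [MeasurableSpace X]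
  [OpensMeasurableSpace X] {x₀ : X} {g : Ω → X → X}

theorem exists_measurable_tendsto_metricFunctional_orbitPt (hT : Measurable T)
    (hg_meas : Measurable fun p : Ω × X => g p.1 p.2) {τ : ℕ → Ω → ℕ}
    (hτ : ∀ I, Measurable (τ I)) :
    ∃ (φ : ℕ → Ω → ℕ) (h : Ω → X → ℝ), (∀ j ω, j ≤ φ j ω) ∧
      (∀ y, Measurable fun ω => h ω y) ∧
      ∀ ω, Tendsto (fun j => metricFunctional x₀ (orbitPt T g x₀ (τ (φ j ω) ω) ω)) atTop
        (𝓝 (h ω)) := by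
  refine exists_measurable_subseq_limit
    (u := fun I ω => metricFunctional x₀ (orbitPt T g x₀ (τ I ω) ω)) (fun I y => ?_)
    (fun I ω => lipschitzWith_metricFunctional x₀ _) fun ω y => ⟨dist y x₀, fun I =>
      abs_apply_le_of_mem_closure_range (subset_closure ⟨_, rfl⟩) y⟩
  have horbit : Measurable fun ω => orbitPt T g x₀ (τ I ω) ω :=
    measurable_comp_countable_index (measurable_orbitPt hT hg_meas x₀) (hτ I)
  exact (horbit.dist measurable_const).sub (horbit.dist measurable_const)

theorem exists_measurable_closure_range_metricFunctional_lt_div (hT : Ergodic T μ)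
    (hg : ∀ ω, Isometry (g ω)) (hg_meas : Measurable fun p : Ω × X => g p.1 p.2)
    (hint : Integrable (fun ω => dist (g ω x₀) x₀) μ) {l : ℝ}
    (hl : IsMeanGrowthRate μ (displacement T g x₀) l) :
    ∃ h : Ω → X → ℝ, (∀ y, Measurable fun ω => h ω y) ∧
      (∀ ω, h ω ∈ closure (Set.range (metricFunctional x₀))) ∧
      ∀ᵐ ω ∂μ, ∀ B < l, ∀ᶠ n : ℕ in atTop, B < -h ω (orbitPt T g x₀ n ω) / n := by
  have ha := isSubadditiveCocycle_displacement hT.toMeasurePreserving hg hg_meas hint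
  obtain ⟨s, τ, hs, hτ_meas, hτ_ge, hτ⟩ := ha.exists_measurable_good_times hT hl
    (ε := fun i => 1 / ((i : ℝ) + 1)) fun i => by positivity
  obtain ⟨φ, h, hφ, hh_meas, hh⟩ :=
    exists_measurable_tendsto_metricFunctional_orbitPt (x₀ := x₀) hT.measurable hg_meas hτ_meas
  have hh_mem (ω : Ω) : h ω ∈ closure (Set.range (metricFunctional x₀)) :=
    mem_closure_of_tendsto (hh ω) (.of_forall fun _ => ⟨_, rfl⟩)
  have hosc : ∀ᵐ ω ∂μ, ∀ i, Tendsto (fun n : ℕ =>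
      (∑ r ∈ Finset.range (s i + 1), displacement T g x₀ r (T^[n] ω)) / n) atTop (𝓝 0) :=
    ae_all_iff.2 fun i => ae_tendsto_comp_iterate_div hT
      (f := fun ω => ∑ r ∈ Finset.range (s i + 1), displacement T g x₀ r ω)
      (integrable_finsetSum _ fun r _ => ha.integrable r)
  refine ⟨h, hh_meas, hh_mem, ?_⟩
  filter_upwards [hτ, hosc] with ω ⟨m, hm⟩ hosc B hB
  have hτφ : Tendsto (fun j => τ (φ j ω) ω) atTop atTop :=
    tendsto_atTop_mono (fun j => (hφ j ω).trans (hτ_ge _ ω)) tendsto_id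
  refine eventually_lt_div_of_forall_sub_le_mul (H := fun n => -h ω (orbitPt T g x₀ n ω))
    tendsto_one_div_add_atTop_nhds_zero_nat hs (m := m) (fun i hi => ?_) hosc
    (fun i n r hr => neg_apply_orbitPt_add_sub_le hg x₀
      (lipschitzWith_of_mem_closure_range (hh_mem ω)) hr ω) hB
  refine mul_le_neg_apply_orbitPt_of_tendsto hg hτφ (hh ω) (hs i) ?_
  filter_upwards [eventually_gt_atTop i] with j hj
  exact hm (φ j ω) i (Finset.mem_Ico.2 ⟨hi, hj.trans_le (hφ j ω)⟩)

theorem noncommutative_ergodic_theorem_general (hT : Ergodic T μ) (hg : ∀ ω, Isometry (g ω))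
    (hg_meas : Measurable fun p : Ω × X => g p.1 p.2)
    (hint : Integrable (fun ω => dist (g ω x₀) x₀) μ) {l : ℝ}
    (hl : l = ⨅ N : {n : ℕ // 0 < n}, (∫ ω, dist (orbitPt T g x₀ N ω) x₀ ∂μ) / (N : ℕ)) :
    (∀ᵐ ω ∂μ, Tendsto (fun n : ℕ => dist (orbitPt T g x₀ n ω) x₀ / n) atTop (𝓝 l)) ∧
    ∃ h : Ω → X → ℝ, (∀ y, Measurable fun ω => h ω y) ∧
      (∀ᵐ ω ∂μ, h ω ∈ closure (Set.range (metricFunctional x₀))) ∧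
      (∀ᵐ ω ∂μ, Tendsto (fun n : ℕ => -h ω (orbitPt T g x₀ n ω) / n) atTop (𝓝 l)) ∧
      (0 < l → ∀ᵐ ω ∂μ, h ω ∉ Set.range (metricFunctional x₀)) := by
  have hrate : IsMeanGrowthRate μ (displacement T g x₀) l := hl ▸ isMeanGrowthRate_displacement μ x₀
  have hup := (isSubadditiveCocycle_displacement hT.toMeasurePreserving hg hg_meas
    hint).ae_eventually_div_lt hT hrate
  obtain ⟨h, hh_meas, hh_mem, hlow⟩ :=
    exists_measurable_closure_range_metricFunctional_lt_div hT hg hg_meas hint hrate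
  have hle (n : ℕ) (ω : Ω) :
      -h ω (orbitPt T g x₀ n ω) / n ≤ displacement T g x₀ n ω / n := by
    gcongr
    exact (neg_le_abs _).trans (abs_apply_le_of_mem_closure_range (hh_mem ω) _)
  have hlim : ∀ᵐ ω ∂μ, Tendsto (fun n : ℕ => -h ω (orbitPt T g x₀ n ω) / n) atTop (𝓝 l) := by
    filter_upwards [hup, hlow] with ω hup hlow
    exact tendsto_order.2 ⟨hlow, fun B hB => (hup B hB).mono fun n => (hle n ω).trans_lt⟩
  refine ⟨?_, h, hh_meas, .of_forall hh_mem, hlim, fun hl_pos =>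
    hlim.mono fun ω => notMem_range_metricFunctional_of_tendsto hl_pos⟩
  filter_upwards [hup, hlow] with ω hup hlow
  exact tendsto_order.2 ⟨fun B hB => (hlow B hB).mono fun n hn => hn.trans_le (hle n ω), hup⟩

end NoncommutativeErgodicTheorem

/-- **Karlsson–Ledrappier noncommutative ergodic theorem.** -/
theorem noncommutative_ergodic_theorem
    {Ω : Type*} [MeasurableSpace Ω] {μ : Measure Ω} [IsProbabilityMeasure μ]
    {T : Ω → Ω} (hT : Ergodic T μ)
    {X : Type*} [MetricSpace X] [ProperSpace X]
    [MeasurableSpace X] [BorelSpace X] (x₀ : X)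
    (g : Ω → X → X)
    (hiso : ∀ ω, Isometry (g ω) ∧ Function.Surjective (g ω))
    (hmeas : Measurable fun p : Ω × X => g p.1 p.2)
    (hint : Integrable (fun ω => dist (g ω x₀) x₀) μ)
    (l : ℝ)
    (hl : l = ⨅ N : {n : ℕ // 0 < n},
      (∫ ω, dist (orbitPt T g x₀ (N : ℕ) ω) x₀ ∂μ) / ((N : ℕ) : ℝ)) :
    (∀ᵐ ω ∂μ,
      Tendsto (fun N : ℕ => dist (orbitPt T g x₀ N ω) x₀ / (N : ℝ)) atTop (𝓝 l)) ∧
    ∃ h : Ω → X → ℝ,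
      (∀ y : X, Measurable fun ω => h ω y) ∧
      (∀ᵐ ω ∂μ,
        h ω ∈ closure {f : X → ℝ | ∃ x : X, f = fun y => dist x y - dist x x₀}) ∧
      (∀ᵐ ω ∂μ,
        Tendsto (fun N : ℕ => -h ω (orbitPt T g x₀ N ω) / (N : ℝ)) atTop (𝓝 l)) ∧
      (0 < l → ∀ᵐ ω ∂μ,
        h ω ∉ {f : X → ℝ | ∃ x : X, f = fun y => dist x y - dist x x₀}) := by
  rw [← range_metricFunctional]
  exact noncommutative_ergodic_theorem_general hT (fun ω => (hiso ω).1) hmeas hint hl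
end

section
/- Let X be a compact metric space, T : X → X a continuous map, and f : X → ℝ a continuous function. Define f_n(x) := f(x) + f(Tx) + ⋯ + f(T^{n−1}x) and a_n := sup_{x ∈ X} f_n(x). Then a_{n+m} ≤ a_n + a_m for all n, m ≥ 1, hence l := lim_{N→∞} a_N / N exists; and there exists a T-invariant Borel probability measure μ on X such that ∫_X f dμ ≥ l. -/
open MeasureTheory Filter Topology

/-!
By compactness the supremum `a_n` is attained at a point `x_n`, so that `a_n / n` is the Birkhoff
average of `f` over the orbit segment `x_n, T x_n, …, T^{n-1} x_n`. Along an ultrafilter the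
averages over these segments converge for every continuous function simultaneously, and their limits
form a positive linear functional on `C(X, ℝ)`, which the Riesz–Markov–Kakutani theorem turns into a
measure. Replacing `x_n` by `T x_n` changes the averages by `O(1 / n)`, so the measure is invariant,
and it integrates `f` to `lim a_n / n`, a limit that exists by Fekete's lemma.
-/

open scoped CompactlySupported

theorem continuous_birkhoffSum {X M : Type*} [TopologicalSpace X] [TopologicalSpace M]
    [AddCommMonoid M] [ContinuousAdd M] {T : X → X} {f : X → M} (hT : Continuous T)
    (hf : Continuous f) (n : ℕ) : Continuous (birkhoffSum T f n) :=
  continuous_finsetSum _ fun i _ => hf.comp (hT.iterate i)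

theorem subadditive_iSup_birkhoffSum {X : Type*} [Nonempty X] {T : X → X} {f : X → ℝ}
    (hf : ∀ n, BddAbove (Set.range (birkhoffSum T f n))) :
    Subadditive fun n => ⨆ x, birkhoffSum T f n x := by
  intro n m
  refine ciSup_le fun x => ?_
  rw [birkhoffSum_add]
  exact add_le_add (le_ciSup (hf n) x) (le_ciSup (hf m) (T^[n] x))

theorem birkhoffAverage_comp_self (R : Type*) {X M : Type*} [DivisionSemiring R] [AddCommMonoid M]
    [Module R M] (T : X → X) (g : X → M) (n : ℕ) (x : X) :
    birkhoffAverage R T (g ∘ T) n x = birkhoffAverage R T g n (T x) := by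
  simp only [birkhoffAverage, birkhoffSum, Function.comp_apply, ← Function.iterate_succ_apply,
    ← Function.iterate_succ_apply']

theorem birkhoffAverage_mono (R : Type*) {X M : Type*} [Field R] [LinearOrder R]
    [IsStrictOrderedRing R] [AddCommMonoid M] [PartialOrder M] [IsOrderedAddMonoid M] [Module R M]
    [PosSMulMono R M] (T : X → X) {g g' : X → M} (h : g ≤ g') (n : ℕ) (x : X) :
    birkhoffAverage R T g n x ≤ birkhoffAverage R T g' n x :=
  smul_le_smul_of_nonneg_left (Finset.sum_le_sum fun _ _ => h _) (by positivity)

theorem norm_birkhoffAverage_le (𝕜 : Type*) {X E : Type*} [RCLike 𝕜] [NormedAddCommGroup E]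
    [NormedSpace 𝕜 E] (T : X → X) {g : X → E} {C : ℝ} (hg : ∀ x, ‖g x‖ ≤ C) (n : ℕ) (x : X) :
    ‖birkhoffAverage 𝕜 T g n x‖ ≤ C := by
  have hC : 0 ≤ C := (norm_nonneg _).trans (hg x)
  have hsum : ‖birkhoffSum T g n x‖ ≤ n * C := by
    simpa [birkhoffSum] using norm_sum_le_of_le (Finset.range n) fun i _ => hg (T^[i] x)
  rw [birkhoffAverage, norm_smul, norm_inv, RCLike.norm_natCast, inv_mul_eq_div]
  exact div_le_of_le_mul₀ n.cast_nonneg hC (by rwa [mul_comm])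

theorem tendsto_birkhoffAverage_apply_sub_birkhoffAverage_of_tendsto_atTop (𝕜 : Type*)
    {ι X E : Type*} [RCLike 𝕜] [NormedAddCommGroup E] [NormedSpace 𝕜 E] {l : Filter ι}
    {N : ι → ℕ} (hN : Tendsto N l atTop) {g : X → E} (hg : Bornology.IsBounded (Set.range g))
    (T : X → X) (x : ι → X) :
    Tendsto (fun i =>
      birkhoffAverage 𝕜 T g (N i) (T (x i)) - birkhoffAverage 𝕜 T g (N i) (x i)) l (𝓝 0) := by
  obtain ⟨C, hC⟩ := Metric.isBounded_range_iff.1 hg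
  have hlim : Tendsto (fun i => C / (N i : ℝ)) l (𝓝 0) :=
    tendsto_const_nhds.div_atTop (tendsto_natCast_atTop_atTop.comp hN)
  refine squeeze_zero_norm (fun i => ?_) hlim
  rw [← dist_eq_norm, dist_birkhoffAverage_apply_birkhoffAverage]
  gcongr
  exact hC _ _

theorem exists_birkhoffAverage_eq_iSup_birkhoffSum_div {X : Type*} [TopologicalSpace X]
    [CompactSpace X] [Nonempty X] {T : X → X} (hT : Continuous T) {f : X → ℝ} (hf : Continuous f)
    (n : ℕ) : ∃ x, birkhoffAverage ℝ T f n x = (⨆ y, birkhoffSum T f n y) / n := by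
  obtain ⟨x, hx⟩ :=
    (isCompact_range (continuous_birkhoffSum hT hf n)).sSup_mem (Set.range_nonempty _)
  exact ⟨x, by rw [birkhoffAverage, hx, smul_eq_mul, inv_mul_eq_div, iSup]⟩

/-- The Birkhoff average over the first `n` points of the orbit of `x`, as a positive linear
functional on `C(X, ℝ)`; it plays the role of the empirical measure of this orbit segment. -/
noncomputable def birkhoffAverageFunctional {X : Type*} [TopologicalSpace X] (T : X → X) (n : ℕ)
    (x : X) : C(X, ℝ) →ₚ[ℝ] ℝ where
  toFun g := birkhoffAverage ℝ T g n x
  map_add' g h := by rw [ContinuousMap.coe_add, birkhoffAverage_add]; rfl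
  map_smul' c g := by
    simp only [birkhoffAverage, birkhoffSum, ContinuousMap.smul_apply, ← Finset.smul_sum,
      smul_comm _ c, RingHom.id_apply]
  monotone' _ _ h := birkhoffAverage_mono ℝ T h n x

theorem exists_positiveLinearMap_tendsto_ultrafilter {ι R E F : Type*} [Semiring R]
    [AddCommMonoid E] [PartialOrder E] [Module R E]
    [AddCommMonoid F] [PartialOrder F] [Module R F]
    [TopologicalSpace F] [ContinuousAdd F] [ContinuousConstSMul R F] [OrderClosedTopology F]
    (U : Ultrafilter ι) {Λ : ι → (E →ₚ[R] F)} {K : E → Set F} (hK : ∀ g, IsCompact (K g))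
    (hΛ : ∀ i g, Λ i g ∈ K g) :
    ∃ Φ : E →ₚ[R] F, ∀ g, Tendsto (fun i => Λ i g) U (𝓝 (Φ g)) := by
  have hlim (g : E) : ∃ a, Tendsto (fun i => Λ i g) U (𝓝 a) := by
    obtain ⟨a, -, ha⟩ := (hK g).ultrafilter_le_nhds' (U.map fun i => Λ i g)
      (Ultrafilter.mem_map.2 (univ_mem' fun i => hΛ i g))
    exact ⟨a, ha⟩
  choose Φ hΦ using hlim
  refine ⟨⟨⟨⟨Φ, fun g h => ?_⟩, fun c g => ?_⟩, fun g h hgh => ?_⟩, hΦ⟩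
  · exact tendsto_nhds_unique (hΦ (g + h)) (by simpa only [map_add] using (hΦ g).add (hΦ h))
  · exact tendsto_nhds_unique (hΦ (c • g)) (by
      simpa only [map_smul, RingHom.id_apply] using (hΦ g).const_smul c)
  · exact le_of_tendsto_of_tendsto' (hΦ g) (hΦ h) fun i => (Λ i).monotone' hgh

theorem exists_regular_forall_integral_eq {X : Type*} [TopologicalSpace X] [CompactSpace X]
    [T2Space X] [MeasurableSpace X] [BorelSpace X] (Φ : C(X, ℝ) →ₚ[ℝ] ℝ) :
    ∃ μ : Measure X, μ.Regular ∧ ∀ g : C(X, ℝ), ∫ x, g x ∂μ = Φ g := by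
  let Ψ : C_c(X, ℝ) →ₚ[ℝ] ℝ :=
    { toFun := fun g => Φ g
      map_add' := fun g h => map_add Φ (g : C(X, ℝ)) h
      map_smul' := fun c g => map_smul Φ c (g : C(X, ℝ))
      monotone' := fun _ _ h => Φ.monotone' h }
  exact ⟨RealRMK.rieszMeasure Ψ, inferInstance, fun g =>
    RealRMK.integral_rieszMeasure Ψ (CompactlySupportedContinuousMap.continuousMapEquiv g)⟩

theorem measurePreserving_of_forall_integral_comp_eq {X Y : Type*}
    [TopologicalSpace X] [MeasurableSpace X] [BorelSpace X]
    [TopologicalSpace Y] [T2Space Y] [LocallyCompactSpace Y] [MeasurableSpace Y] [BorelSpace Y]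
    {μ : Measure X} [IsFiniteMeasure μ] [μ.InnerRegular] {ν : Measure Y} [ν.Regular]
    {T : X → Y} (hT : Continuous T)
    (h : ∀ g : C_c(Y, ℝ), ∫ x, g (T x) ∂μ = ∫ y, g y ∂ν) : MeasurePreserving T μ ν := by
  -- A finite inner regular measure is regular, so the pushforward is determined by its integrals.
  have : (μ.map T).InnerRegular := Measure.InnerRegular.map_of_continuous hT
  refine ⟨hT.measurable, Measure.ext_of_integral_eq_on_compactlySupported fun g => ?_⟩
  exact (integral_map hT.aemeasurable g.continuous.aestronglyMeasurable).trans (h g)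

/-- A form of the **Krylov–Bogolyubov theorem**. -/
theorem exists_measurePreserving_integral_eq_of_tendsto_birkhoffAverage {ι X : Type*}
    [TopologicalSpace X] [CompactSpace X] [T2Space X] [MeasurableSpace X] [BorelSpace X]
    {T : X → X} (hT : Continuous T) {f : X → ℝ} (hf : Continuous f) {l : Filter ι} [l.NeBot]
    {N : ι → ℕ} (hN : Tendsto N l atTop) {x : ι → X} {a : ℝ}
    (ha : Tendsto (fun i => birkhoffAverage ℝ T f (N i) (x i)) l (𝓝 a)) :
    ∃ μ : Measure X, μ.Regular ∧ IsProbabilityMeasure μ ∧ MeasurePreserving T μ μ ∧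
      ∫ y, f y ∂μ = a := by
  have hU : (Ultrafilter.of l : Filter ι) ≤ l := Ultrafilter.of_le l
  obtain ⟨Φ, hΦ⟩ : ∃ Φ : C(X, ℝ) →ₚ[ℝ] ℝ, ∀ g : C(X, ℝ),
      Tendsto (fun i => birkhoffAverage ℝ T g (N i) (x i)) (Ultrafilter.of l) (𝓝 (Φ g)) :=
    exists_positiveLinearMap_tendsto_ultrafilter (Ultrafilter.of l)
      (Λ := fun i => birkhoffAverageFunctional T (N i) (x i))
      (fun g => isCompact_closedBall (0 : ℝ) ‖g‖)
      fun i g => mem_closedBall_zero_iff.2 (norm_birkhoffAverage_le ℝ T g.norm_coe_le_norm _ _)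
  obtain ⟨μ, hreg, hμ⟩ := exists_regular_forall_integral_eq Φ
  have hone : Φ 1 = 1 := by
    refine tendsto_nhds_unique (hΦ 1) (tendsto_const_nhds.congr' ?_)
    filter_upwards [hU (hN.eventually_ne_atTop 0)] with i hi
    rw [birkhoffAverage_of_comp_eq ℝ rfl (Nat.cast_ne_zero.2 hi)]
    rfl
  have hcomp (g : C(X, ℝ)) : Φ (g.comp ⟨T, hT⟩) = Φ g := by
    have hdiff := (tendsto_birkhoffAverage_apply_sub_birkhoffAverage_of_tendsto_atTop ℝ hN
      (isCompact_range g.continuous).isBounded T x).mono_left hU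
    refine tendsto_nhds_unique (hΦ (g.comp ⟨T, hT⟩)) ?_
    simpa only [ContinuousMap.coe_comp, ContinuousMap.coe_mk, birkhoffAverage_comp_self,
      sub_add_cancel, zero_add] using hdiff.add (hΦ g)
  have hprob : IsProbabilityMeasure μ := by
    rw [isProbabilityMeasure_iff_real]
    simpa [hone] using hμ 1
  refine ⟨μ, hreg, hprob, measurePreserving_of_forall_integral_comp_eq hT fun g => ?_, ?_⟩
  · exact (hμ ((g : C(X, ℝ)).comp ⟨T, hT⟩)).trans ((hcomp g).trans (hμ g).symm)
  · exact (hμ ⟨f, hf⟩).trans (tendsto_nhds_unique (hΦ ⟨f, hf⟩) (ha.mono_left hU))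

theorem exists_maximizing_invariant_measure_general {X : Type*} [TopologicalSpace X]
    [CompactSpace X] [T2Space X] [Nonempty X] [MeasurableSpace X] [BorelSpace X]
    {T : X → X} (hT : Continuous T) {f : X → ℝ} (hf : Continuous f) :
    Subadditive (fun n => ⨆ x, birkhoffSum T f n x) ∧
    ∃ l : ℝ, Tendsto (fun n : ℕ => (⨆ x, birkhoffSum T f n x) / n) atTop (𝓝 l) ∧
      ∃ μ : Measure X, μ.Regular ∧ IsProbabilityMeasure μ ∧ MeasurePreserving T μ μ ∧
        ∫ x, f x ∂μ = l := by
  have hsub : Subadditive fun n => ⨆ x, birkhoffSum T f n x :=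
    subadditive_iSup_birkhoffSum fun n =>
      (isCompact_range (continuous_birkhoffSum hT hf n)).bddAbove
  choose x hx using exists_birkhoffAverage_eq_iSup_birkhoffSum_div hT hf
  have hbdd : BddBelow (Set.range fun n : ℕ => (⨆ y, birkhoffSum T f n y) / n) := by
    obtain ⟨C, hC⟩ := isCompact_univ.exists_bound_of_continuousOn hf.continuousOn
    refine ⟨-C, Set.forall_mem_range.2 fun n => ?_⟩
    rw [← hx n]
    exact neg_le_of_abs_le (norm_birkhoffAverage_le ℝ T (fun y => hC y trivial) n (x n))
  have hlim := hsub.tendsto_lim hbdd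
  exact ⟨hsub, hsub.lim, hlim, exists_measurePreserving_integral_eq_of_tendsto_birkhoffAverage
    hT hf tendsto_id (hlim.congr fun n => (hx n).symm)⟩

/-- **Existence of a maximizing invariant measure for Birkhoff suprema.**
With `f_n(x) = f(x) + f(Tx) + ⋯ + f(T^{n−1}x)` and `a_n = sup_x f_n(x)`, the sequence
`(a_n)` is subadditive, `a_N/N → l`, and some `T`-invariant Borel probability measure `μ`
satisfies `∫ f dμ ≥ l`. -/
theorem exists_maximizing_invariant_measure
    {X : Type*} [MetricSpace X] [CompactSpace X] [Nonempty X]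
    [MeasurableSpace X] [BorelSpace X]
    (T : X → X) (hT : Continuous T) (f : X → ℝ) (hf : Continuous f) :
    (∀ n m : ℕ, 1 ≤ n → 1 ≤ m →
      (⨆ x : X, ∑ i ∈ Finset.range (n + m), f (T^[i] x))
        ≤ (⨆ x : X, ∑ i ∈ Finset.range n, f (T^[i] x))
          + (⨆ x : X, ∑ i ∈ Finset.range m, f (T^[i] x))) ∧
    ∃ l : ℝ,
      Tendsto (fun N : ℕ => (⨆ x : X, ∑ i ∈ Finset.range N, f (T^[i] x)) / (N : ℝ))
        atTop (𝓝 l) ∧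
      ∃ μ : Measure X, IsProbabilityMeasure μ ∧ MeasurePreserving T μ μ ∧
        l ≤ ∫ x, f x ∂μ := by
  obtain ⟨hsub, l, hl, μ, -, hprob, hinv, hint⟩ := exists_maximizing_invariant_measure_general hT hf
  exact ⟨fun n m _ _ => hsub n m, l, hl, μ, hprob, hinv, hint.ge⟩
end

section
/- Let D : [0, ∞) → [0, ∞) be increasing with D(0) = 0, D(t) → ∞ as t → ∞, and such that D(t)/t decreases monotonically to 0 as t → ∞. Let (Ω, μ) be a probability space, T : Ω → Ω an ergodic measure-preserving transformation, and f : Ω → ℝ a measurable function with ∫_Ω D(|f|) dμ < ∞. Then for μ-a.e. ω ∈ Ω, lim_{N→∞} (1/N) D( | f(ω) + f(Tω) + ⋯ + f(T^{N−1}ω) | ) = 0. -/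
open MeasureTheory Filter Topology

/-!
A `D` that vanishes at `0` and for which `D t / t` is nonincreasing is subadditive. Splitting the
terms of the sum at a level `K` and using subadditivity gives
`D |S_N f| ≤ D (N K) + S_N φ_K`, where `φ_K` is `D |f|` on `{K < |f|}` and `0` elsewhere. The first
term is `o(N)`. By the maximal ergodic inequality, the set where some `S_N φ_K` exceeds `N ε` has
measure at most `(∫ φ_K) / ε`, and `∫ φ_K → 0` as `K → ∞` because `D |f|` is integrable. Hence
`limsup D |S_N f| / N ≤ ε` almost everywhere, and no pointwise ergodic theorem is needed.
-/

open scoped ENNReal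

section Subadditive

lemma add_le_of_antitoneOn_div {𝕜 : Type*} [Field 𝕜] [LinearOrder 𝕜] [IsStrictOrderedRing 𝕜]
    {D : 𝕜 → 𝕜} (hD0 : D 0 = 0) (hanti : AntitoneOn (fun t => D t / t) (Set.Ioi 0)) {s t : 𝕜}
    (hs : 0 ≤ s) (ht : 0 ≤ t) : D (s + t) ≤ D s + D t := by
  rcases hs.eq_or_lt with rfl | hs
  · simp [hD0]
  rcases ht.eq_or_lt with rfl | ht
  · simp [hD0]
  have hst : 0 < s + t := add_pos hs ht
  have hle_s : D (s + t) / (s + t) * s ≤ D s :=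
    (le_div_iff₀ hs).1 (hanti hs hst (le_add_of_nonneg_right ht.le))
  have hle_t : D (s + t) / (s + t) * t ≤ D t :=
    (le_div_iff₀ ht).1 (hanti ht hst (le_add_of_nonneg_left hs.le))
  calc D (s + t) = D (s + t) / (s + t) * s + D (s + t) / (s + t) * t := by
        rw [← mul_add, div_mul_cancel₀ _ hst.ne']
    _ ≤ D s + D t := add_le_add hle_s hle_t

lemma norm_sum_le_card_mul_add_sum_filter {ι E : Type*} [SeminormedAddCommGroup E] (s : Finset ι)
    (a : ι → E) {K : ℝ} (hK : 0 ≤ K) :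
    ‖∑ i ∈ s, a i‖ ≤ s.card * K + ∑ i ∈ s with K < ‖a i‖, ‖a i‖ := by
  calc ‖∑ i ∈ s, a i‖ ≤ ∑ i ∈ s, ‖a i‖ := norm_sum_le _ _
    _ ≤ ∑ i ∈ s, (K + if K < ‖a i‖ then ‖a i‖ else 0) := by
        gcongr with i
        split_ifs <;> linarith
    _ = s.card * K + ∑ i ∈ s with K < ‖a i‖, ‖a i‖ := by
        rw [Finset.sum_add_distrib, Finset.sum_const, nsmul_eq_mul, Finset.sum_filter]

lemma apply_norm_sum_le_of_subadditive {ι E M : Type*} [SeminormedAddCommGroup E]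
    [AddCommMonoid M] [PartialOrder M] [IsOrderedAddMonoid M] {D : ℝ → M}
    (hmono : MonotoneOn D (Set.Ici 0)) (hD0 : D 0 ≤ 0)
    (hadd : ∀ s t, 0 ≤ s → 0 ≤ t → D (s + t) ≤ D s + D t)
    (s : Finset ι) (a : ι → E) {K : ℝ} (hK : 0 ≤ K) :
    D ‖∑ i ∈ s, a i‖ ≤ D (s.card * K) + ∑ i ∈ s with K < ‖a i‖, D ‖a i‖ := by
  have hcard : 0 ≤ s.card * K := by positivity
  have hlarge : 0 ≤ ∑ i ∈ s with K < ‖a i‖, ‖a i‖ := by positivity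
  calc D ‖∑ i ∈ s, a i‖ ≤ D (s.card * K + ∑ i ∈ s with K < ‖a i‖, ‖a i‖) :=
        hmono (norm_nonneg _) (add_nonneg hcard hlarge)
          (norm_sum_le_card_mul_add_sum_filter s a hK)
    _ ≤ D (s.card * K) + D (∑ i ∈ s with K < ‖a i‖, ‖a i‖) := hadd _ _ hcard hlarge
    _ ≤ D (s.card * K) + ∑ i ∈ s with K < ‖a i‖, D ‖a i‖ := by
        gcongr
        exact Finset.le_sum_of_subadditive_on_pred D (0 ≤ ·) hD0 hadd (fun _ _ => add_nonneg) _
          fun _ _ => norm_nonneg _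

lemma apply_norm_birkhoffSum_le_of_subadditive {Ω E M : Type*} [SeminormedAddCommGroup E]
    [AddCommMonoid M] [PartialOrder M] [IsOrderedAddMonoid M] {D : ℝ → M}
    (hmono : MonotoneOn D (Set.Ici 0)) (hD0 : D 0 ≤ 0)
    (hadd : ∀ s t, 0 ≤ s → 0 ≤ t → D (s + t) ≤ D s + D t)
    (T : Ω → Ω) (f : Ω → E) {K : ℝ} (hK : 0 ≤ K) (n : ℕ) (ω : Ω) :
    D ‖birkhoffSum T f n ω‖ ≤
      D (n * K) + birkhoffSum T ({ω | K < ‖f ω‖}.indicator fun ω => D ‖f ω‖) n ω := by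
  classical
  simpa [birkhoffSum, Set.indicator_apply, Finset.sum_filter] using
    apply_norm_sum_le_of_subadditive hmono hD0 hadd (Finset.range n) (fun i => f (T^[i] ω)) hK

lemma tendsto_apply_natCast_mul_div_natCast {D : ℝ → ℝ} (hD0 : D 0 = 0)
    (hratio : Tendsto (fun t => D t / t) atTop (𝓝 0)) {K : ℝ} (hK : 0 ≤ K) :
    Tendsto (fun n : ℕ => D (n * K) / n) atTop (𝓝 0) := by
  rcases hK.eq_or_lt with rfl | hK
  · simp [hD0]
  have hscaled : Tendsto (fun n : ℕ => D (n * K) / (n * K) * K) atTop (𝓝 (0 * K)) :=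
    (hratio.comp (tendsto_natCast_atTop_atTop.atTop_mul_const hK)).mul_const K
  rw [zero_mul] at hscaled
  refine hscaled.congr fun n => ?_
  field_simp

lemma tendsto_ofReal_div_natCast_zero {a : ℕ → ℝ}
    (ha : Tendsto (fun n : ℕ => a n / n) atTop (𝓝 0)) :
    Tendsto (fun n : ℕ => ENNReal.ofReal (a n) / n) atTop (𝓝 0) := by
  have hofReal := ENNReal.tendsto_ofReal ha
  rw [ENNReal.ofReal_zero] at hofReal
  refine hofReal.congr' ?_
  filter_upwards [eventually_gt_atTop 0] with n hn
  rw [ENNReal.ofReal_div_of_pos (Nat.cast_pos.2 hn), ENNReal.ofReal_natCast]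

end Subadditive

lemma lintegral_comp_measurePreserving₀ {α β : Type*} [MeasurableSpace α] [MeasurableSpace β]
    {μ : Measure α} {ν : Measure β} {φ : α → β} (hφ : MeasurePreserving φ μ ν) {h : β → ℝ≥0∞}
    (hh : AEMeasurable h ν) : ∫⁻ a, h (φ a) ∂μ = ∫⁻ b, h b ∂ν := by
  rw [← hφ.map_eq] at hh ⊢
  exact (lintegral_map' hh hφ.aemeasurable).symm

section MaximalInequality

variable {Ω : Type*} {T : Ω → Ω} {g : Ω → ℝ≥0∞} {c : ℝ≥0∞}

/-- The largest excess `max_{k ≤ n} (S_k g - k c)` of the Birkhoff sums of `g` over the line of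
slope `c`, used to prove the maximal ergodic inequality. It is encoded by a recursion in which the
truncated subtraction of `ℝ≥0∞` plays the role of the maximum with `0`. -/
noncomputable def birkhoffExcess (T : Ω → Ω) (g : Ω → ℝ≥0∞) (c : ℝ≥0∞) : ℕ → Ω → ℝ≥0∞
  | 0 => 0
  | n + 1 => fun ω => g ω + birkhoffExcess T g c n (T ω) - c

lemma birkhoffExcess_le_succ (n : ℕ) (ω : Ω) :
    birkhoffExcess T g c n ω ≤ birkhoffExcess T g c (n + 1) ω := by
  induction n generalizing ω with
  | zero => exact zero_le
  | succ n ih => exact tsub_le_tsub_right (add_le_add_right (ih (T ω)) (g ω)) c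

lemma birkhoffSum_le_birkhoffExcess_add (n : ℕ) (ω : Ω) :
    birkhoffSum T g n ω ≤ birkhoffExcess T g c n ω + n * c := by
  induction n generalizing ω with
  | zero => simp
  | succ n ih =>
    calc birkhoffSum T g (n + 1) ω = g ω + birkhoffSum T g n (T ω) := birkhoffSum_succ' ..
      _ ≤ g ω + (birkhoffExcess T g c n (T ω) + n * c) := by gcongr; exact ih (T ω)
      _ = g ω + birkhoffExcess T g c n (T ω) + n * c := (add_assoc ..).symm
      _ ≤ birkhoffExcess T g c (n + 1) ω + c + n * c :=
        add_le_add le_tsub_add le_rfl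
      _ = birkhoffExcess T g c (n + 1) ω + (n + 1 : ℕ) * c := by push_cast; ring

lemma add_birkhoffExcess_le_of_pos {n : ℕ} {ω : Ω} (hpos : 0 < birkhoffExcess T g c n ω) :
    c + birkhoffExcess T g c n ω ≤ g ω + birkhoffExcess T g c n (T ω) := by
  have hc : c ≤ g ω + birkhoffExcess T g c n (T ω) :=
    (tsub_pos_iff_lt.1 (hpos.trans_le (birkhoffExcess_le_succ n ω))).le
  calc c + birkhoffExcess T g c n ω ≤ c + birkhoffExcess T g c (n + 1) ω := by
        gcongr; exact birkhoffExcess_le_succ n ω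
    _ = g ω + birkhoffExcess T g c n (T ω) := add_tsub_cancel_of_le hc

lemma indicator_add_birkhoffExcess_le (n : ℕ) (ω : Ω) :
    {ω | 0 < birkhoffExcess T g c n ω}.indicator (fun _ => c) ω + birkhoffExcess T g c n ω ≤
      g ω + birkhoffExcess T g c n (T ω) := by
  by_cases hω : 0 < birkhoffExcess T g c n ω
  · simpa only [Set.indicator_apply, Set.mem_ofPred_eq, hω, if_true] using
      add_birkhoffExcess_le_of_pos hω
  · simp [nonpos_iff_eq_zero.1 (not_lt.1 hω)]

variable [MeasurableSpace Ω] {μ : Measure Ω}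

lemma aemeasurable_birkhoffExcess (hT : Measure.QuasiMeasurePreserving T μ μ)
    (hg : AEMeasurable g μ) (n : ℕ) : AEMeasurable (birkhoffExcess T g c n) μ := by
  induction n with
  | zero => exact aemeasurable_const
  | succ n ih => exact (hg.add (ih.comp_quasiMeasurePreserving hT)).sub_const c

lemma lintegral_birkhoffExcess_ne_top (hT : MeasurePreserving T μ μ) (hg : AEMeasurable g μ)
    (hg_top : ∫⁻ ω, g ω ∂μ ≠ ∞) (n : ℕ) : ∫⁻ ω, birkhoffExcess T g c n ω ∂μ ≠ ∞ := by
  induction n with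
  | zero => simp [birkhoffExcess]
  | succ n ih =>
    have hn := aemeasurable_birkhoffExcess (c := c) hT.quasiMeasurePreserving hg n
    refine ne_top_of_le_ne_top (ENNReal.add_ne_top.2 ⟨hg_top, ih⟩) ?_
    calc ∫⁻ ω, birkhoffExcess T g c (n + 1) ω ∂μ
        ≤ ∫⁻ ω, g ω + birkhoffExcess T g c n (T ω) ∂μ := lintegral_mono fun _ => tsub_le_self
      _ = ∫⁻ ω, g ω ∂μ + ∫⁻ ω, birkhoffExcess T g c n ω ∂μ := by
          rw [lintegral_add_left' hg, lintegral_comp_measurePreserving₀ hT hn]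

lemma mul_measure_birkhoffExcess_pos_le (hT : MeasurePreserving T μ μ) (hg : AEMeasurable g μ)
    (n : ℕ) : c * μ {ω | 0 < birkhoffExcess T g c n ω} ≤ ∫⁻ ω, g ω ∂μ := by
  by_cases hg_top : ∫⁻ ω, g ω ∂μ = ∞
  · simp [hg_top]
  set M := birkhoffExcess T g c n
  have hM : AEMeasurable M μ := aemeasurable_birkhoffExcess hT.quasiMeasurePreserving hg n
  have hpos : NullMeasurableSet {ω | 0 < M ω} μ := nullMeasurableSet_lt aemeasurable_const hM
  refine (ENNReal.add_le_add_iff_right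
    (lintegral_birkhoffExcess_ne_top (c := c) hT hg hg_top n)).1 ?_
  calc c * μ {ω | 0 < M ω} + ∫⁻ ω, M ω ∂μ
      = ∫⁻ ω, {ω | 0 < M ω}.indicator (fun _ => c) ω + M ω ∂μ := by
        rw [lintegral_add_right' _ hM, lintegral_indicator_const₀ hpos]
    _ ≤ ∫⁻ ω, g ω + M (T ω) ∂μ := lintegral_mono (indicator_add_birkhoffExcess_le n)
    _ = ∫⁻ ω, g ω ∂μ + ∫⁻ ω, M ω ∂μ := by
        rw [lintegral_add_left' hg, lintegral_comp_measurePreserving₀ hT hM]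

lemma mul_measure_exists_mul_lt_birkhoffSum_le (hT : MeasurePreserving T μ μ)
    (hg : AEMeasurable g μ) (c : ℝ≥0∞) :
    c * μ {ω | ∃ n : ℕ, n * c < birkhoffSum T g n ω} ≤ ∫⁻ ω, g ω ∂μ := by
  have hmono : Monotone fun n => {ω | 0 < birkhoffExcess T g c n ω} :=
    monotone_nat_of_le_succ fun n ω hω => lt_of_lt_of_le hω (birkhoffExcess_le_succ n ω)
  have hsub : {ω | ∃ n : ℕ, n * c < birkhoffSum T g n ω} ⊆
      ⋃ n, {ω | 0 < birkhoffExcess T g c n ω} := by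
    rintro ω ⟨n, hn⟩
    have hlt : 0 + n * c < birkhoffExcess T g c n ω + n * c := by
      simpa only [zero_add] using hn.trans_le (birkhoffSum_le_birkhoffExcess_add n ω)
    exact Set.mem_iUnion.2 ⟨n, lt_of_add_lt_add_right hlt⟩
  calc c * μ {ω | ∃ n : ℕ, n * c < birkhoffSum T g n ω}
      ≤ c * μ (⋃ n, {ω | 0 < birkhoffExcess T g c n ω}) := by gcongr
    _ = ⨆ n, c * μ {ω | 0 < birkhoffExcess T g c n ω} := by
        rw [hmono.measure_iUnion, ENNReal.mul_iSup]
    _ ≤ ∫⁻ ω, g ω ∂μ := iSup_le (mul_measure_birkhoffExcess_pos_le hT hg)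

end MaximalInequality

section AlmostEverywhere

variable {Ω ι : Type*} [MeasurableSpace Ω] {μ : Measure Ω} {T : Ω → Ω}
  {l : Filter ι} [l.NeBot] {u : ℕ → Ω → ℝ≥0∞} {v : ι → ℕ → ℝ≥0∞} {g : ι → Ω → ℝ≥0∞}

lemma ae_eventually_div_le_of_le_add_birkhoffSum (hT : MeasurePreserving T μ μ)
    (hg : ∀ k, AEMeasurable (g k) μ) (hg_lim : Tendsto (fun k => ∫⁻ ω, g k ω ∂μ) l (𝓝 0))
    (hv : ∀ k, Tendsto (fun n => v k n / n) atTop (𝓝 0))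
    (hu : ∀ k n ω, u n ω ≤ v k n + birkhoffSum T (g k) n ω) {ε : ℝ≥0∞} (hε : 0 < ε) :
    ∀ᵐ ω ∂μ, ∀ᶠ n : ℕ in atTop, u n ω / n ≤ ε + ε := by
  have hsub (k : ι) : {ω | ¬ ∀ᶠ n : ℕ in atTop, u n ω / n ≤ ε + ε} ⊆
      {ω | ∃ n : ℕ, n * ε < birkhoffSum T (g k) n ω} := by
    intro ω
    contrapose
    intro hω
    rw [Set.notMem_ofPred_iff, not_not]
    filter_upwards [ENNReal.tendsto_nhds_zero.1 (hv k) ε hε] with n hn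
    have hS : birkhoffSum T (g k) n ω ≤ n * ε := not_lt.1 fun h => hω ⟨n, h⟩
    calc u n ω / n ≤ (v k n + birkhoffSum T (g k) n ω) / n := by gcongr; exact hu k n ω
      _ = v k n / n + birkhoffSum T (g k) n ω / n := ENNReal.add_div
      _ ≤ ε + ε := add_le_add hn (ENNReal.div_le_of_le_mul' hS)
  have hle (k : ι) : ε * μ {ω | ¬ ∀ᶠ n : ℕ in atTop, u n ω / n ≤ ε + ε} ≤ ∫⁻ ω, g k ω ∂μ :=
    (mul_le_mul_right (measure_mono (hsub k)) ε).trans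
      (mul_measure_exists_mul_lt_birkhoffSum_le hT (hg k) ε)
  have hzero : ε * μ {ω | ¬ ∀ᶠ n : ℕ in atTop, u n ω / n ≤ ε + ε} = 0 :=
    nonpos_iff_eq_zero.1 (ge_of_tendsto' hg_lim hle)
  exact (mul_eq_zero.1 hzero).resolve_left hε.ne'

lemma ae_tendsto_div_of_le_add_birkhoffSum (hT : MeasurePreserving T μ μ)
    (hg : ∀ k, AEMeasurable (g k) μ) (hg_lim : Tendsto (fun k => ∫⁻ ω, g k ω ∂μ) l (𝓝 0))
    (hv : ∀ k, Tendsto (fun n => v k n / n) atTop (𝓝 0))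
    (hu : ∀ k n ω, u n ω ≤ v k n + birkhoffSum T (g k) n ω) :
    ∀ᵐ ω ∂μ, Tendsto (fun n : ℕ => u n ω / n) atTop (𝓝 0) := by
  have hcountable : ∀ᵐ ω ∂μ, ∀ m : ℕ, ∀ᶠ n : ℕ in atTop,
      u n ω / n ≤ (m : ℝ≥0∞)⁻¹ + (m : ℝ≥0∞)⁻¹ :=
    ae_all_iff.2 fun m => ae_eventually_div_le_of_le_add_birkhoffSum hT hg hg_lim hv hu
      (ENNReal.inv_pos.2 (ENNReal.natCast_ne_top m))
  filter_upwards [hcountable] with ω hω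
  refine ENNReal.tendsto_nhds_zero.2 fun ε hε => ?_
  obtain ⟨m, hm⟩ := ENNReal.exists_inv_nat_lt (ENNReal.half_pos hε.ne').ne'
  filter_upwards [hω m] with n hn
  exact hn.trans ((add_le_add hm.le hm.le).trans (ENNReal.add_halves ε).le)

lemma tendsto_lintegral_indicator_natCast_lt {φ : Ω → ℝ} {h : Ω → ℝ≥0∞} (hφ : AEMeasurable φ μ)
    (hh : AEMeasurable h μ) (hh_top : ∫⁻ ω, h ω ∂μ ≠ ∞) :
    Tendsto (fun K : ℕ => ∫⁻ ω, {ω | (K : ℝ) < φ ω}.indicator h ω ∂μ) atTop (𝓝 0) := by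
  have hpointwise (ω : Ω) :
      Tendsto (fun K : ℕ => {ω | (K : ℝ) < φ ω}.indicator h ω) atTop (𝓝 0) := by
    refine tendsto_const_nhds.congr' ?_
    filter_upwards [tendsto_natCast_atTop_atTop.eventually_ge_atTop (φ ω)] with K hK
    exact (Set.indicator_of_notMem (s := {ω | (K : ℝ) < φ ω}) hK.not_gt h).symm
  simpa using tendsto_lintegral_of_dominated_convergence' h
    (fun K => hh.indicator₀ (nullMeasurableSet_lt aemeasurable_const hφ))
    (fun K => ae_of_all _ (Set.indicator_le_self _ h)) hh_top (ae_of_all _ hpointwise)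

end AlmostEverywhere

theorem birkhoff_sum_D_sublinear_general {Ω E : Type*} [MeasurableSpace Ω] {μ : Measure Ω}
    [SeminormedAddCommGroup E] {T : Ω → Ω} (hT : MeasurePreserving T μ μ) {D : ℝ → ℝ}
    (hmono : MonotoneOn D (Set.Ici 0)) (hD0 : D 0 = 0)
    (hadd : ∀ s t, 0 ≤ s → 0 ≤ t → D (s + t) ≤ D s + D t)
    (hratio : Tendsto (fun t => D t / t) atTop (𝓝 0)) {f : Ω → E} (hf : AEStronglyMeasurable f μ)
    (hint : Integrable (fun ω => D ‖f ω‖) μ) :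
    ∀ᵐ ω ∂μ, Tendsto (fun N : ℕ => D ‖birkhoffSum T f N ω‖ / N) atTop (𝓝 0) := by
  have hD_nonneg {t : ℝ} (ht : 0 ≤ t) : 0 ≤ D t := hD0 ▸ hmono Set.self_mem_Ici ht ht
  have hφ : AEMeasurable (fun ω => ENNReal.ofReal (D ‖f ω‖)) μ := hint.aemeasurable.ennreal_ofReal
  have htrunc (K N : ℕ) (ω : Ω) : ENNReal.ofReal (D ‖birkhoffSum T f N ω‖) ≤
      ENNReal.ofReal (D (N * K)) +
        birkhoffSum T ({ω | K < ‖f ω‖}.indicator fun ω => ENNReal.ofReal (D ‖f ω‖)) N ω :=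
    apply_norm_birkhoffSum_le_of_subadditive (D := fun t => ENNReal.ofReal (D t))
      (ENNReal.ofReal_mono.comp_monotoneOn hmono) (by simp [hD0])
      (fun s t hs ht => (ENNReal.ofReal_mono (hadd s t hs ht)).trans ENNReal.ofReal_add_le)
      T f K.cast_nonneg N ω
  have hlinear (K : ℕ) : Tendsto (fun N : ℕ => ENNReal.ofReal (D (N * K)) / N) atTop (𝓝 0) :=
    tendsto_ofReal_div_natCast_zero
      (tendsto_apply_natCast_mul_div_natCast hD0 hratio K.cast_nonneg)
  filter_upwards [ae_tendsto_div_of_le_add_birkhoffSum hT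
    (fun K : ℕ => hφ.indicator₀ (nullMeasurableSet_lt aemeasurable_const hf.norm.aemeasurable))
    (tendsto_lintegral_indicator_natCast_lt hf.norm.aemeasurable hφ hint.lintegral_lt_top.ne)
    hlinear htrunc] with ω hω
  simpa [Function.comp_def, ENNReal.toReal_ofReal (hD_nonneg (norm_nonneg _))] using
    (ENNReal.tendsto_toReal ENNReal.zero_ne_top).comp hω

/-- **Noncommutative ergodic theorem for `D`-integrable functions (Aaronson /
Karlsson–Monod).** -/
theorem birkhoff_sum_D_sublinear
    {Ω : Type*} [MeasurableSpace Ω] {μ : Measure Ω} [IsProbabilityMeasure μ]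
    {T : Ω → Ω} (hT : Ergodic T μ)
    (D : ℝ → ℝ)
    (hmono : MonotoneOn D (Set.Ici 0)) (hD0 : D 0 = 0)
    (hDnonneg : ∀ t : ℝ, 0 ≤ t → 0 ≤ D t)
    (hDinf : Tendsto D atTop atTop)
    (hratio_anti : AntitoneOn (fun t => D t / t) (Set.Ioi (0 : ℝ)))
    (hratio_zero : Tendsto (fun t => D t / t) atTop (𝓝 0))
    (f : Ω → ℝ) (hf : Measurable f)
    (hint : Integrable (fun ω => D |f ω|) μ) :
    ∀ᵐ ω ∂μ,
      Tendsto
        (fun N : ℕ => D |∑ i ∈ Finset.range N, f (T^[i] ω)| / (N : ℝ))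
        atTop (𝓝 0) :=
  birkhoff_sum_D_sublinear_general (f := f) hT.toMeasurePreserving hmono hD0
    (fun _ _ => add_le_of_antitoneOn_div hD0 hratio_anti) hratio_zero hf.aestronglyMeasurable hint
end
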